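/- arXiv:1201.0090 — 14 statements merged into one kernel-verified Lean document; each statement's English description precedes it below -/
import Mathlib

section
/- The extended bicyclic semigroup C_Z is simple: if I ⊆ C_Z is a nonempty subset such that s·x ∈ I and x·s ∈ I for all x ∈ I and all s ∈ C_Z (i.e., I is a two-sided ideal), then I = C_Z. -/
/-- The multiplication of the extended bicyclic semigroup `C_Z` on `ℤ × ℤ`. -/
def czMul (x y : ℤ × ℤ) : ℤ × ℤ :=
  if x.2 < y.1 then (x.1 - x.2 + y.1, y.2)
  else if x.2 = y.1 then (x.1, y.2)
  else (x.1, y.2 + x.2 - y.1)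

theorem stmt_2 (I : Set (ℤ × ℤ)) (hne : I.Nonempty)
    (hideal : ∀ x ∈ I, ∀ s : ℤ × ℤ, czMul s x ∈ I ∧ czMul x s ∈ I) :
    I = Set.univ := by
  obtain ⟨⟨a, b⟩, hab⟩ := hne
  refine Set.eq_univ_of_forall fun ⟨c, d⟩ => ?_
  -- `(c, d) = (c, a) · (a, b) · (b, d)`
  have hcb : (c, b) ∈ I := by simpa [czMul] using (hideal (a, b) hab (c, a)).1
  simpa [czMul] using (hideal (c, b) hcb (b, d)).2
end

section
/- A nonempty subset L of the extended bicyclic semigroup C_Z is a left ideal (i.e., s·x ∈ L for all s ∈ C_Z and x ∈ L) if and only if either L = C_Z or L = {(x,y) ∈ C_Z : y ≥ a} for some a ∈ ℤ. -/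
theorem le_czMul_snd (s x : ℤ × ℤ) : x.2 ≤ (czMul s x).2 := by
  unfold czMul
  split_ifs <;> dsimp only <;> omega

/-- Every pair whose second coordinate is at least that of `x` is a left multiple of `x`. -/
theorem exists_czMul_eq (x p : ℤ × ℤ) (h : x.2 ≤ p.2) : ∃ s, czMul s x = p := by
  refine ⟨(p.1, x.1 + p.2 - x.2), ?_⟩
  unfold czMul
  split_ifs <;> ext <;> dsimp only at * <;> omega

theorem stmt_5 (L : Set (ℤ × ℤ)) (hne : L.Nonempty) :
    (∀ s : ℤ × ℤ, ∀ x ∈ L, czMul s x ∈ L) ↔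
      (L = Set.univ ∨ ∃ a : ℤ, L = {p : ℤ × ℤ | a ≤ p.2}) := by
  constructor
  · intro h
    have up : ∀ x ∈ L, ∀ p : ℤ × ℤ, x.2 ≤ p.2 → p ∈ L := by
      intro x hx p hp
      obtain ⟨s, rfl⟩ := exists_czMul_eq x p hp
      exact h s x hx
    by_cases hb : ∃ b : ℤ, ∀ x ∈ L, b ≤ x.2
    · right
      obtain ⟨b, hb⟩ := hb
      obtain ⟨x₀, hx₀⟩ := hne
      obtain ⟨a, ⟨x, hx, rfl⟩, hmin⟩ := Int.exists_least_of_bdd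
        (P := fun z => ∃ x ∈ L, x.2 = z)
        ⟨b, by rintro z ⟨x, hx, rfl⟩; exact hb x hx⟩ ⟨x₀.2, x₀, hx₀, rfl⟩
      exact ⟨x.2, Set.ext fun p => ⟨fun hp => hmin p.2 ⟨p, hp, rfl⟩, up x hx p⟩⟩
    · left
      push Not at hb
      refine Set.eq_univ_of_forall fun p => ?_
      obtain ⟨x, hx, hlt⟩ := hb p.2
      exact up x hx p hlt.le
  · rintro (rfl | ⟨a, rfl⟩) s x hx
    · trivial
    · exact le_trans hx (le_czMul_snd s x)
end

section
/- Every congruence C on the extended bicyclic semigroup C_Z that is neither the identity relation nor the universal relation is a group congruence, and the quotient semigroup C_Z/C is a cyclic group; more precisely, there exists a natural number n such that C_Z/C is isomorphic as a semigroup to the group ℤ/nℤ (with n = 0 giving ℤ). -/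
theorem czMul_eq (a b c d : ℤ) :
    czMul (a, b) (c, d) = (a - b + max b c, d - c + max b c) := by
  unfold czMul
  dsimp only
  split_ifs <;> ext <;> dsimp only <;> omega

theorem czMul_eq_of {a b c d u v : ℤ} (h₁ : a - b + max b c = u) (h₂ : d - c + max b c = v) :
    czMul (a, b) (c, d) = (u, v) := by
  rw [czMul_eq, h₁, h₂]

section Congruence

variable {r : ℤ × ℤ → ℤ × ℤ → Prop}

theorem rel_left
    (hcong : ∀ x y s : ℤ × ℤ, r x y → r (czMul s x) (czMul s y) ∧ r (czMul x s) (czMul y s))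
    {a b c d : ℤ} (h : r (a, b) (c, d)) (s t : ℤ) {u v u' v' : ℤ}
    (h₁ : s - t + max t a = u) (h₂ : b - a + max t a = v)
    (h₃ : s - t + max t c = u') (h₄ : d - c + max t c = v') : r (u, v) (u', v') := by
  have := (hcong _ _ (s, t) h).1
  rwa [czMul_eq_of h₁ h₂, czMul_eq_of h₃ h₄] at this

theorem rel_right
    (hcong : ∀ x y s : ℤ × ℤ, r x y → r (czMul s x) (czMul s y) ∧ r (czMul x s) (czMul y s))
    {a b c d : ℤ} (h : r (a, b) (c, d)) (s t : ℤ) {u v u' v' : ℤ}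
    (h₁ : a - b + max b s = u) (h₂ : t - s + max b s = v)
    (h₃ : c - d + max d s = u') (h₄ : t - s + max d s = v') : r (u, v) (u', v') := by
  have := (hcong _ _ (s, t) h).2
  rwa [czMul_eq_of h₁ h₂, czMul_eq_of h₃ h₄] at this

theorem exists_idem_rel_of_fst_lt (hequiv : Equivalence r)
    (hcong : ∀ x y s : ℤ × ℤ, r x y → r (czMul s x) (czMul s y) ∧ r (czMul x s) (czMul y s))
    {a b c d : ℤ} (h : r (a, b) (c, d)) (hac : a < c) :
    ∃ k p : ℤ, k < p ∧ r (k, k) (p, p) := by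
  obtain ⟨p, q, hp, h₁⟩ : ∃ p q : ℤ, a < p ∧ r (a, a) (p, q) :=
    ⟨c - d + max d b, a - b + max d b, by omega,
      rel_right hcong h b a (by omega) (by omega) rfl rfl⟩
  have h₂ : r (p, p) (p, q) :=
    rel_left hcong h₁ p p (by omega) (by omega) (by omega) (by omega)
  exact ⟨a, p, hp, hequiv.trans h₁ (hequiv.symm h₂)⟩

theorem exists_idem_rel_of_snd_lt (hequiv : Equivalence r)
    (hcong : ∀ x y s : ℤ × ℤ, r x y → r (czMul s x) (czMul s y) ∧ r (czMul x s) (czMul y s))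
    {a b d : ℤ} (h : r (a, b) (a, d)) (hbd : b < d) :
    ∃ k p : ℤ, k < p ∧ r (k, k) (p, p) := by
  have h₁ : r (b, b) (b, d) :=
    rel_left hcong h b a (by omega) (by omega) (by omega) (by omega)
  have h₂ : r (d, d) (b, d) :=
    rel_right hcong h₁ d d (by omega) (by omega) (by omega) (by omega)
  exact ⟨b, d, hbd, hequiv.trans h₁ (hequiv.symm h₂)⟩

theorem exists_idem_rel (hequiv : Equivalence r)
    (hcong : ∀ x y s : ℤ × ℤ, r x y → r (czMul s x) (czMul s y) ∧ r (czMul x s) (czMul y s))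
    (hne_id : ¬ ∀ x y : ℤ × ℤ, r x y ↔ x = y) :
    ∃ k p : ℤ, k < p ∧ r (k, k) (p, p) := by
  by_contra hno
  refine hne_id fun x y => ⟨fun h => ?_, fun h => h ▸ hequiv.refl x⟩
  obtain ⟨a, b⟩ := x
  obtain ⟨c, d⟩ := y
  rcases lt_trichotomy a c with hac | rfl | hac
  · exact absurd (exists_idem_rel_of_fst_lt hequiv hcong h hac) hno
  · rcases lt_trichotomy b d with hbd | rfl | hbd
    · exact absurd (exists_idem_rel_of_snd_lt hequiv hcong h hbd) hno
    · rfl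
    · exact absurd (exists_idem_rel_of_snd_lt hequiv hcong (hequiv.symm h) hbd) hno
  · exact absurd (exists_idem_rel_of_fst_lt hequiv hcong (hequiv.symm h) hac) hno

theorem idem_rel (hequiv : Equivalence r)
    (hcong : ∀ x y s : ℤ × ℤ, r x y → r (czMul s x) (czMul s y) ∧ r (czMul x s) (czMul y s))
    (hne_id : ¬ ∀ x y : ℤ × ℤ, r x y ↔ x = y) (k l : ℤ) : r (k, k) (l, l) := by
  obtain ⟨a, p, hap, h⟩ := exists_idem_rel hequiv hcong hne_id
  have step (k : ℤ) : r (k, k) (k + 1, k + 1) := by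
    have h₁ : r (k, a) (k - a + p, p) :=
      rel_left hcong h k a (by omega) (by omega) (by omega) (by omega)
    have h₂ : r (k, k) (k - a + p, k - a + p) :=
      rel_right hcong h₁ a k (by omega) (by omega) (by omega) (by omega)
    -- `k + 1` lies in `(k, k + (p - a)]`, so multiplying by its idempotent fixes the right side.
    have h₃ : r (k + 1, k + 1) (k - a + p, k - a + p) :=
      rel_left hcong h₂ (k + 1) (k + 1) (by omega) (by omega) (by omega) (by omega)
    exact hequiv.trans h₂ (hequiv.symm h₃)
  have base (k : ℤ) : r (0, 0) (k, k) := by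
    induction k using Int.induction_on with
    | zero => exact hequiv.refl _
    | succ i ih => exact hequiv.trans ih (step i)
    | pred i ih =>
      have := step (-(i : ℤ) - 1)
      rw [sub_add_cancel] at this
      exact hequiv.trans ih (hequiv.symm this)
  exact hequiv.trans (hequiv.symm (base k)) (base l)

theorem rel_of_sub_eq (hequiv : Equivalence r)
    (hcong : ∀ x y s : ℤ × ℤ, r x y → r (czMul s x) (czMul s y) ∧ r (czMul x s) (czMul y s))
    (hne_id : ¬ ∀ x y : ℤ × ℤ, r x y ↔ x = y) {a b c d : ℤ} (h : a - b = c - d) :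
    r (a, b) (c, d) := by
  have key (a b c d : ℤ) (hac : a ≤ c) (h : a - b = c - d) : r (a, b) (c, d) :=
    rel_right hcong (idem_rel hequiv hcong hne_id a c) a b
      (by omega) (by omega) (by omega) (by omega)
  rcases le_total a c with hac | hac
  · exact key a b c d hac h
  · exact hequiv.symm (key c d a b hac h.symm)

/-- Multiplication on the right by `(0, n)` subtracts `n` from `a - b` for every `(a, b)`, so
for `x = (a, b)` and `y = (c, d)` the truth of `r x y` depends only on `(a - b) - (c - d)`. -/
theorem rel_translate (hequiv : Equivalence r)
    (hcong : ∀ x y s : ℤ × ℤ, r x y → r (czMul s x) (czMul s y) ∧ r (czMul x s) (czMul y s))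
    (hne_id : ¬ ∀ x y : ℤ × ℤ, r x y ↔ x = y) {a b c d a' b' c' d' : ℤ}
    (h : r (a, b) (c, d)) (he : (a - b) - (c - d) = (a' - b') - (c' - d')) :
    r (a', b') (c', d') := by
  have h₁ := rel_right hcong h 0 ((a - b) - (a' - b')) rfl rfl rfl rfl
  exact hequiv.trans (rel_of_sub_eq hequiv hcong hne_id (by omega))
    (hequiv.trans h₁ (rel_of_sub_eq hequiv hcong hne_id (by omega)))

end Congruence

theorem stmt_7 (r : ℤ × ℤ → ℤ × ℤ → Prop) (hequiv : Equivalence r)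
    (hcong : ∀ x y s : ℤ × ℤ, r x y → r (czMul s x) (czMul s y) ∧ r (czMul x s) (czMul y s))
    (hne_id : ¬ ∀ x y : ℤ × ℤ, r x y ↔ x = y)
    (hne_univ : ¬ ∀ x y : ℤ × ℤ, r x y) :
    ∃ (n : ℕ) (f : ℤ × ℤ → ZMod n),
      Function.Surjective f ∧
      (∀ x y : ℤ × ℤ, f (czMul x y) = f x + f y) ∧
      (∀ x y : ℤ × ℤ, r x y ↔ f x = f y) := by
  let S : AddSubgroup ℤ :=
    { carrier := {m | r (m, 0) (0, 0)}
      zero_mem' := hequiv.refl _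
      add_mem' := fun {m m'} hm hm' =>
        hequiv.trans (rel_translate (c' := m') (d' := 0) hequiv hcong hne_id hm (by omega)) hm'
      neg_mem' := fun {m} hm =>
        rel_translate hequiv hcong hne_id (hequiv.symm hm) (by omega) }
  obtain ⟨g, hg⟩ := Int.subgroup_cyclic S
  have hS (m : ℤ) : r (m, 0) (0, 0) ↔ (g.natAbs : ℤ) ∣ m := by
    change m ∈ S ↔ _
    rw [hg, ← AddSubgroup.zmultiples_eq_closure, Int.mem_zmultiples_iff, Int.natAbs_dvd]
  refine ⟨g.natAbs, fun x => ((x.1 - x.2 : ℤ) : ZMod g.natAbs), fun z => ?_, ?_, ?_⟩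
  · obtain ⟨m, rfl⟩ := ZMod.intCast_surjective z
    exact ⟨(m, 0), by simp⟩
  · rintro ⟨a, b⟩ ⟨c, d⟩
    have h : (a - b + max b c) - (d - c + max b c) = (a - b) + (c - d) := by omega
    simp only [czMul_eq, h, Int.cast_add]
  · rintro ⟨a, b⟩ ⟨c, d⟩
    rw [eq_comm, ZMod.intCast_eq_intCast_iff_dvd_sub, ← hS]
    exact ⟨fun h => rel_translate hequiv hcong hne_id h (by dsimp only; omega),
      fun h => rel_translate hequiv hcong hne_id h (by dsimp only; omega)⟩
end

section
/- For elements (a,b) and (c,d) of the extended bicyclic semigroup C_Z, there exists an integer n such that (a,b)·(n,n) = (c,d)·(n,n) if and only if a − b = c − d. Consequently, the relation (a,b) ~ (c,d) ⟺ a − b = c − d is a congruence on C_Z (the least group congruence) whose quotient is isomorphic to the additive group of integers ℤ. -/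
theorem czMul_fst_sub_snd (x y : ℤ × ℤ) :
    (czMul x y).1 - (czMul x y).2 = (x.1 - x.2) + (y.1 - y.2) := by
  unfold czMul
  split_ifs <;> dsimp only <;> omega

theorem czMul_idem_of_le {a b n : ℤ} (h : b ≤ n) : czMul (a, b) (n, n) = (a - b + n, n) := by
  unfold czMul
  split_ifs <;> dsimp only at * <;> rw [Prod.mk.injEq] <;> omega

theorem stmt_8 :
    (∀ a b c d : ℤ,
      (∃ n : ℤ, czMul (a, b) (n, n) = czMul (c, d) (n, n)) ↔ a - b = c - d) ∧
    (∀ x y s : ℤ × ℤ, x.1 - x.2 = y.1 - y.2 →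
      (czMul s x).1 - (czMul s x).2 = (czMul s y).1 - (czMul s y).2 ∧
      (czMul x s).1 - (czMul x s).2 = (czMul y s).1 - (czMul y s).2) ∧
    ∃ f : ℤ × ℤ → ℤ,
      Function.Surjective f ∧
      (∀ x y : ℤ × ℤ, f (czMul x y) = f x + f y) ∧
      (∀ x y : ℤ × ℤ, x.1 - x.2 = y.1 - y.2 ↔ f x = f y) := by
  refine ⟨fun a b c d => ⟨?_, fun h => ?_⟩, fun x y s h => ?_,
    fun x => x.1 - x.2, fun z => ⟨(z, 0), sub_zero z⟩, czMul_fst_sub_snd, fun _ _ => Iff.rfl⟩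
  · rintro ⟨n, hn⟩
    have h := congrArg (fun x : ℤ × ℤ => x.1 - x.2) hn
    simpa only [czMul_fst_sub_snd, sub_self, add_zero] using h
  · exact ⟨max b d, by
      rw [czMul_idem_of_le (le_max_left b d), czMul_idem_of_le (le_max_right b d), h]⟩
  · simp only [czMul_fst_sub_snd, h, and_self]
end

section
/- Every Hausdorff topology τ on the extended bicyclic semigroup C_Z for which the multiplication is separately continuous (i.e., for each s ∈ C_Z the maps x ↦ s·x and x ↦ x·s are continuous) is the discrete topology. -/
theorem isOpen_quadrant (τ : TopologicalSpace (ℤ × ℤ)) (ht2 : @T2Space (ℤ × ℤ) τ)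
    (hl : ∀ s : ℤ × ℤ, @Continuous _ _ τ τ (fun x => czMul s x))
    (hr : ∀ s : ℤ × ℤ, @Continuous _ _ τ τ (fun x => czMul x s)) (a b : ℤ) :
    @IsOpen _ τ {x : ℤ × ℤ | x.1 ≤ a ∧ x.2 ≤ b} := by
  have h₁ := (@isClosed_eq _ _ τ τ ht2 _ _ (hl (a + 1, a + 1)) (@continuous_id _ τ)).isOpen_compl
  have h₂ := (@isClosed_eq _ _ τ τ ht2 _ _ (hr (b + 1, b + 1)) (@continuous_id _ τ)).isOpen_compl
  convert @IsOpen.inter _ τ _ _ h₁ h₂ using 1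
  ext ⟨c, d⟩
  simp only [czMul, Set.mem_ofPred_eq, Set.mem_inter_iff, Set.mem_compl_iff, id]
  split_ifs <;> grind

theorem stmt_9 (τ : TopologicalSpace (ℤ × ℤ)) (ht2 : @T2Space (ℤ × ℤ) τ)
    (hl : ∀ s : ℤ × ℤ, @Continuous _ _ τ τ (fun x => czMul s x))
    (hr : ∀ s : ℤ × ℤ, @Continuous _ _ τ τ (fun x => czMul x s)) :
    τ = ⊥ := by
  refine TopologicalSpace.ext_iff.mpr fun s => ⟨fun _ => trivial, fun _ => ?_⟩
  rw [← Set.biUnion_of_singleton s]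
  refine @isOpen_biUnion _ _ τ _ _ fun p _ => ?_
  obtain ⟨a, b⟩ := p
  have hU := isOpen_quadrant τ ht2 hl hr a b
  have h₁ := @IsOpen.preimage _ _ τ τ _ (hl (a, a)) _ hU
  have h₂ := @IsOpen.preimage _ _ τ τ _ (hr (b, b)) _ hU
  have h₃ := @IsOpen.preimage _ _ τ τ _ (hl (a - 1, a - 1)) _
    (@isOpen_compl_singleton _ τ (@T2Space.t1Space _ τ ht2) (a - 1, b - 1))
  convert @IsOpen.inter _ τ _ _ (@IsOpen.inter _ τ _ _ hU h₁) (@IsOpen.inter _ τ _ _ h₂ h₃) using 1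
  ext ⟨c, d⟩
  simp only [czMul, Set.mem_ofPred_eq, Set.mem_inter_iff, Set.mem_compl_iff, Set.mem_preimage,
    Set.mem_singleton_iff, Prod.mk.injEq]
  split_ifs <;> grind
end

section
/- Let T be a Hausdorff topological space with an associative multiplication that is separately continuous (for each t ∈ T the maps x ↦ t·x and x ↦ x·t are continuous), and let ι : C_Z → T be an injective map with ι(x·y) = ι(x)·ι(y) for all x,y ∈ C_Z whose image is dense in T. Then ι(C_Z) is an open subset of T and every point of ι(C_Z) is isolated in T. -/
/-- The conditions that isolate `(a, b)` in `C_Z`: each of them is a negated equation between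
translates of `x` and constants, hence open in any Hausdorff shift-continuous topology. -/
theorem czMul_isolating (a b : ℤ) (x : ℤ × ℤ) :
    (czMul (a + 1, a + 1) x ≠ x ∧ czMul x (b + 1, b + 1) ≠ x ∧
      czMul (czMul (a, a) x) (b + 1, b + 1) ≠ czMul (a, a) x ∧
      czMul (a + 1, a + 1) (czMul x (b, b)) ≠ czMul x (b, b) ∧
      czMul (a - 1, a - 1) x ≠ (a - 1, b - 1)) ↔ x = (a, b) := by
  obtain ⟨c, d⟩ := x
  constructor
  · rintro ⟨h1, h2, h3, h4, h5⟩
    have hc : c ≤ a := by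
      by_contra h
      apply h1
      simp only [czMul]
      split_ifs <;> ext <;> simp <;> omega
    have hd : d ≤ b := by
      by_contra h
      apply h2
      simp only [czMul]
      split_ifs <;> ext <;> simp <;> omega
    have hl : czMul (a, a) (c, d) = (a, d + a - c) := by
      simp only [czMul]
      split_ifs <;> ext <;> simp <;> omega
    have hr : czMul (c, d) (b, b) = (c - d + b, b) := by
      simp only [czMul]
      split_ifs <;> ext <;> simp <;> omega
    rw [hl] at h3
    rw [hr] at h4
    have hle : d + a - c ≤ b := by
      by_contra h
      apply h3
      simp only [czMul]
      split_ifs <;> ext <;> simp <;> omega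
    have hge : c - d + b ≤ a := by
      by_contra h
      apply h4
      simp only [czMul]
      split_ifs <;> ext <;> simp <;> omega
    have hac : a ≤ c := by
      by_contra h
      apply h5
      simp only [czMul]
      split_ifs <;> ext <;> simp <;> omega
    ext <;> simp <;> omega
  · rintro h
    simp only [Prod.mk.injEq] at h
    obtain ⟨rfl, rfl⟩ := h
    simp [czMul]
    omega

/-- A point of a dense set that is isolated within that set is isolated in the whole `T1` space. -/
theorem isOpen_singleton_of_denseRange {X T : Type*} [TopologicalSpace T] [T1Space T]
    {f : X → T} (hf : DenseRange f) {V : Set T} (hV : IsOpen V) {p : X}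
    (h : ∀ x, f x ∈ V ↔ f x = f p) : IsOpen ({f p} : Set T) := by
  have hVp : V = {f p} := by
    refine Set.Subset.antisymm (fun t ht => ?_) (Set.singleton_subset_iff.2 ((h p).2 rfl))
    by_contra hne
    -- `V \ {f p}` is open and contains `t`, so it would meet the dense range.
    obtain ⟨x, hx, hxp⟩ := hf.exists_mem_open (hV.sdiff isClosed_singleton) ⟨t, ht, hne⟩
    exact hxp ((h x).1 hx)
  exact hVp ▸ hV

theorem stmt_10 {T : Type*} [TopologicalSpace T] [T2Space T] (mul : T → T → T)
    (hassoc : ∀ a b c : T, mul (mul a b) c = mul a (mul b c))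
    (hl : ∀ t : T, Continuous fun x => mul t x)
    (hr : ∀ t : T, Continuous fun x => mul x t)
    (ι : ℤ × ℤ → T) (hinj : Function.Injective ι)
    (hhom : ∀ x y : ℤ × ℤ, ι (czMul x y) = mul (ι x) (ι y))
    (hdense : DenseRange ι) :
    IsOpen (Set.range ι) ∧ ∀ x : ℤ × ℤ, IsOpen ({ι x} : Set T) := by
  have key : ∀ x : ℤ × ℤ, IsOpen ({ι x} : Set T) := by
    rintro ⟨a, b⟩
    let e : ℤ → T := fun n => ι (n, n)
    have hV : IsOpen {t : T | mul (e (a + 1)) t ≠ t ∧ mul t (e (b + 1)) ≠ t ∧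
        mul (mul (e a) t) (e (b + 1)) ≠ mul (e a) t ∧
        mul (e (a + 1)) (mul t (e b)) ≠ mul t (e b) ∧
        mul (e (a - 1)) t ≠ ι (a - 1, b - 1)} :=
      (isOpen_ne_fun (hl _) continuous_id).inter <|
        (isOpen_ne_fun (hr _) continuous_id).inter <|
        (isOpen_ne_fun ((hr _).comp (hl _)) (hl _)).inter <|
        (isOpen_ne_fun ((hl _).comp (hr _)) (hr _)).inter <|
        isOpen_ne_fun (hl _) continuous_const
    refine isOpen_singleton_of_denseRange hdense hV fun x => ?_
    simp only [Set.mem_ofPred_eq, e, ← hhom, hinj.ne_iff, hinj.eq_iff]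
    exact czMul_isolating a b x
  refine ⟨?_, key⟩
  rw [← Set.iUnion_singleton_eq_range]
  exact isOpen_iUnion key
end

section
/- Let T be a Hausdorff topological space with an associative, separately continuous multiplication, and let ι : C_Z → T be an injective map with ι(x·y) = ι(x)·ι(y) for all x,y ∈ C_Z whose image is dense in T. Suppose f ∈ T ∖ ι(C_Z) satisfies f·f = f and there exists an integer n with ι(n,n)·f = f·ι(n,n) = ι(n,n). Then there exists an open neighbourhood U of f in T such that every element of U ∩ ι(C_Z) is of the form ι(a,a) for some a ∈ ℤ. -/
theorem czMul_right_fixed {n a b : ℤ} (h : a < b) :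
    czMul (czMul (n, n) (a, b)) (n + 1, n + 1) = czMul (n, n) (a, b) := by
  simp only [czMul]
  split_ifs <;> simp_all <;> omega

theorem czMul_left_fixed {n a b : ℤ} (h : b < a) :
    czMul (n + 1, n + 1) (czMul (a, b) (n, n)) = czMul (a, b) (n, n) := by
  simp only [czMul]
  split_ifs <;> simp_all <;> omega

theorem stmt_11 {T : Type*} [TopologicalSpace T] [T2Space T] (mul : T → T → T)
    (hassoc : ∀ a b c : T, mul (mul a b) c = mul a (mul b c))
    (hl : ∀ t : T, Continuous fun x => mul t x)
    (hr : ∀ t : T, Continuous fun x => mul x t)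
    (ι : ℤ × ℤ → T) (hinj : Function.Injective ι)
    (hhom : ∀ x y : ℤ × ℤ, ι (czMul x y) = mul (ι x) (ι y))
    (hdense : DenseRange ι)
    (f : T) (hf_not : f ∉ Set.range ι) (hf_idem : mul f f = f)
    (hn : ∃ n : ℤ, mul (ι (n, n)) f = ι (n, n) ∧ mul f (ι (n, n)) = ι (n, n)) :
    ∃ U : Set T, IsOpen U ∧ f ∈ U ∧
      ∀ t ∈ U ∩ Set.range ι, ∃ a : ℤ, t = ι (a, a) := by
  obtain ⟨n, h1, h2⟩ := hn
  refine ⟨{t | mul (mul (ι (n, n)) t) (ι (n + 1, n + 1)) ≠ mul (ι (n, n)) t} ∩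
    {t | mul (ι (n + 1, n + 1)) (mul t (ι (n, n))) ≠ mul t (ι (n, n))}, ?_, ⟨?_, ?_⟩, ?_⟩
  · exact (isOpen_ne_fun ((hr _).comp (hl _)) (hl _)).inter
      (isOpen_ne_fun ((hl _).comp (hr _)) (hr _))
  · simp only [Set.mem_ofPred_eq, h1]
    rw [← hhom, hinj.ne_iff]
    simp [czMul]
  · simp only [Set.mem_ofPred_eq, h2]
    rw [← hhom, hinj.ne_iff]
    simp [czMul]
  · rintro _ ⟨⟨hR, hL⟩, ⟨a, b⟩, rfl⟩
    simp only [Set.mem_ofPred_eq, ← hhom, hinj.ne_iff] at hR hL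
    rcases lt_trichotomy a b with h | rfl | h
    · exact absurd (czMul_right_fixed h) hR
    · exact ⟨a, rfl⟩
    · exact absurd (czMul_left_fixed h) hL
end

section
/- Let T be a Hausdorff topological space with an associative, separately continuous multiplication, and let ι : C_Z → T be an injective map with ι(x·y) = ι(x)·ι(y) for all x,y ∈ C_Z whose image is dense in T. Suppose f ∈ T ∖ ι(C_Z) satisfies f·f = f and there exists an integer n with ι(n,n)·f = f·ι(n,n) = ι(n,n). Then f is a two-sided identity of T: f·x = x·f = x for every x ∈ T. -/
theorem idem_czMul (n c d : ℤ) : czMul (n, n) (c, d) = (max n c, d + (max n c - c)) := by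
  unfold czMul
  grind

theorem czMul_idem (n c d : ℤ) : czMul (c, d) (n, n) = (c + (max n d - d), max n d) := by
  unfold czMul
  grind

/-- In the corner `e n · C_Z · e n` (a copy of the bicyclic monoid), the only element fixed neither by
left nor by right multiplication by `e (n + 1)` is `e n`; its preimage under `x ↦ e n · x · e n`
is the set of idempotents `e k` with `k ≤ n`. -/
theorem diag_of_corner (n : ℤ) (x : ℤ × ℤ)
    (h1 : czMul (n + 1, n + 1) (czMul (czMul (n, n) x) (n, n)) ≠ czMul (czMul (n, n) x) (n, n))
    (h2 : czMul (czMul (czMul (n, n) x) (n, n)) (n + 1, n + 1) ≠ czMul (czMul (n, n) x) (n, n)) :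
    x.1 = x.2 ∧ x.1 ≤ n := by
  obtain ⟨c, d⟩ := x
  -- Multiplying by `e n` on either side preserves the difference of the coordinates and moves both
  -- coordinates to values at least `n`.
  obtain ⟨p, q, hpq, hp, hq, hd, hc⟩ : ∃ p q : ℤ, czMul (czMul (n, n) (c, d)) (n, n) = (p, q) ∧
      n ≤ p ∧ n ≤ q ∧ p - q = c - d ∧ c ≤ p := by
    rw [idem_czMul, czMul_idem]
    refine ⟨_, _, rfl, ?_⟩
    omega
  rw [hpq] at h1 h2
  rw [idem_czMul, Ne, Prod.mk.injEq] at h1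
  rw [czMul_idem, Ne, Prod.mk.injEq] at h2
  simp only
  omega

/-- A closed condition on `T` that holds at `e k` for all `k ≤ m` holds at `f`. -/
theorem mem_of_closed {T : Type*} [TopologicalSpace T] [T2Space T] (mul : T → T → T)
    (hl : ∀ t : T, Continuous fun x => mul t x)
    (hr : ∀ t : T, Continuous fun x => mul x t)
    (ι : ℤ × ℤ → T) (hinj : Function.Injective ι)
    (hhom : ∀ x y : ℤ × ℤ, ι (czMul x y) = mul (ι x) (ι y))
    (hdense : DenseRange ι)
    (f : T) (hf_not : f ∉ Set.range ι) (n : ℤ)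
    (hn1 : mul (ι (n, n)) f = ι (n, n))
    (m : ℤ) (C : Set T) (hC : IsClosed C) (hCm : ∀ k ≤ m, ι (k, k) ∈ C) : f ∈ C := by
  by_contra hfC
  have hcont : Continuous fun x => mul (mul (ι (n, n)) x) (ι (n, n)) := (hr _).comp (hl _)
  have hfn : mul (mul (ι (n, n)) f) (ι (n, n)) = ι (n, n) := by
    rw [hn1, ← hhom]
    simp [czMul]
  have hO1 : IsOpen {x | mul (ι (n + 1, n + 1)) (mul (mul (ι (n, n)) x) (ι (n, n))) ≠
      mul (mul (ι (n, n)) x) (ι (n, n))} := isOpen_ne_fun ((hl _).comp hcont) hcont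
  have hO2 : IsOpen {x | mul (mul (mul (ι (n, n)) x) (ι (n, n))) (ι (n + 1, n + 1)) ≠
      mul (mul (ι (n, n)) x) (ι (n, n))} := isOpen_ne_fun ((hr _).comp hcont) hcont
  have hfin : IsClosed ((fun k : ℤ => ι (k, k)) '' Set.Ioc m n) :=
    ((Set.finite_Ioc m n).image _).isClosed
  obtain ⟨x, ⟨⟨⟨h1, h2⟩, h3⟩, h4⟩⟩ := hdense.exists_mem_open
    (((hO1.inter hO2).inter hfin.isOpen_compl).inter hC.isOpen_compl) ⟨f, by
      refine ⟨⟨⟨?_, ?_⟩, ?_⟩, hfC⟩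
      · simp only [Set.mem_ofPred_eq, hfn]
        rw [← hhom]
        exact hinj.ne (by simp [czMul])
      · simp only [Set.mem_ofPred_eq, hfn]
        rw [← hhom]
        exact hinj.ne (by simp [czMul])
      · rintro ⟨k, -, hk⟩
        exact hf_not ⟨_, hk⟩⟩
  simp only [Set.mem_ofPred_eq, ← hhom, hinj.ne_iff] at h1 h2
  obtain ⟨hx, hxn⟩ := diag_of_corner n x h1 h2
  obtain ⟨c, d⟩ := x
  obtain rfl : c = d := hx
  rcases le_or_gt c m with h | h
  · exact h4 (hCm c h)
  · exact h3 ⟨c, ⟨h, hxn⟩, rfl⟩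


theorem stmt_12 {T : Type*} [TopologicalSpace T] [T2Space T] (mul : T → T → T)
    (hassoc : ∀ a b c : T, mul (mul a b) c = mul a (mul b c))
    (hl : ∀ t : T, Continuous fun x => mul t x)
    (hr : ∀ t : T, Continuous fun x => mul x t)
    (ι : ℤ × ℤ → T) (hinj : Function.Injective ι)
    (hhom : ∀ x y : ℤ × ℤ, ι (czMul x y) = mul (ι x) (ι y))
    (hdense : DenseRange ι)
    (f : T) (hf_not : f ∉ Set.range ι) (hf_idem : mul f f = f)
    (hn : ∃ n : ℤ, mul (ι (n, n)) f = ι (n, n) ∧ mul f (ι (n, n)) = ι (n, n)) :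
    ∀ x : T, mul f x = x ∧ mul x f = x := by
  obtain ⟨n, hn1, -⟩ := hn
  have key := mem_of_closed mul hl hr ι hinj hhom hdense f hf_not n hn1
  have hleft (m : ℤ) : mul f (ι (m, m)) = ι (m, m) :=
    key m {x | mul x (ι (m, m)) = ι (m, m)} (isClosed_eq (hr _) continuous_const) fun k hk => by
      rw [Set.mem_ofPred_eq, ← hhom]
      congr 1
      rw [czMul_idem, Prod.mk.injEq]
      omega
  have hright (m : ℤ) : mul (ι (m, m)) f = ι (m, m) :=
    key m {x | mul (ι (m, m)) x = ι (m, m)} (isClosed_eq (hl _) continuous_const) fun k hk => by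
      rw [Set.mem_ofPred_eq, ← hhom]
      congr 1
      rw [idem_czMul, Prod.mk.injEq]
      omega
  intro x
  refine hdense.induction_on (p := fun x => mul f x = x ∧ mul x f = x) x
    ((isClosed_eq (hl f) continuous_id).inter (isClosed_eq (hr f) continuous_id)) ?_
  rintro ⟨a, b⟩
  have ha : mul (ι (a, a)) (ι (a, b)) = ι (a, b) := by
    rw [← hhom]
    simp [czMul]
  have hb : mul (ι (a, b)) (ι (b, b)) = ι (a, b) := by
    rw [← hhom]
    simp [czMul]
  constructor
  · rw [← ha, ← hassoc, hleft]
  · rw [← hb, hassoc, hright]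
end

section
/- Let T be a Hausdorff topological space with a jointly continuous associative multiplication and a two-sided identity 1_T, and let ι : C_Z → T be an injective map with ι(x·y) = ι(x)·ι(y) for all x,y ∈ C_Z whose image is dense in T. If the group of units H(1_T) = {x ∈ T : ∃ y ∈ T, x·y = y·x = 1_T} has more than one element, then H(1_T) is a discrete subspace of T and, as a group, H(1_T) is infinite cyclic (isomorphic to the additive group of integers ℤ). -/
section

variable {T : Type*} [Monoid T] {ι : ℤ × ℤ → T}

/-- `u` acts on the idempotents of `C_Z` from the right as the shift by `k` of the second
coordinate. -/
def IsShift (ι : ℤ × ℤ → T) (u : T) (k : ℤ) : Prop :=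
  ∀ n : ℤ, ι (n, n) * u = ι (n, n + k)

lemma IsShift.mul (hhom : ∀ x y : ℤ × ℤ, ι (czMul x y) = ι x * ι y) {u v : T} {k l : ℤ}
    (hu : IsShift ι u k) (hv : IsShift ι v l) : IsShift ι (u * v) (k + l) := by
  intro n
  have h : ι (n, n + k) = ι (n, n + k) * ι (n + k, n + k) := by rw [← hhom]; simp [czMul]
  rw [← mul_assoc, hu n, h, mul_assoc, hv, ← hhom]
  simp [czMul, add_assoc]

lemma IsShift.unique (hinj : Function.Injective ι) {u : T} {k l : ℤ}
    (hu : IsShift ι u k) (hv : IsShift ι u l) : k = l := by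
  have h := (hu 0).symm.trans (hv 0)
  simpa [hinj.eq_iff] using h

lemma isShift_one : IsShift ι (1 : T) 0 := fun n => by simp

end

/-- The open set `U` is `{ι p}`: otherwise `U \ {ι p}` is a nonempty open set, as points are closed,
and it misses the dense range. -/
lemma isOpen_singleton_of_dense {T : Type*} [TopologicalSpace T] [T1Space T] {ι : ℤ × ℤ → T}
    (hdense : DenseRange ι) {U : Set T} (hU : IsOpen U) {p : ℤ × ℤ} (hp : ι p ∈ U)
    (h : ∀ q, ι q ∈ U → q = p) : IsOpen ({ι p} : Set T) := by
  have : U = {ι p} := by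
    refine Set.Subset.antisymm (fun x hx => ?_) (by simpa using hp)
    by_contra hne
    obtain ⟨q, hq⟩ := hdense.exists_mem_open (hU.inter isOpen_compl_singleton) ⟨x, hx, hne⟩
    exact hq.2 (by rw [h q hq.1]; rfl)
  rwa [← this]

section

variable {T : Type*} [TopologicalSpace T] [T2Space T] [Monoid T] [ContinuousMul T]
  {ι : ℤ × ℤ → T}

lemma isOpen_singleton_diag (hinj : Function.Injective ι)
    (hhom : ∀ x y : ℤ × ℤ, ι (czMul x y) = ι x * ι y) (hdense : DenseRange ι) (n : ℤ) :
    IsOpen ({ι (n, n)} : Set T) := by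
  -- For `x = (a, b)`, the conditions say in turn: `a ≤ n`, `b ≤ n`, `b ≤ a`, `a ≤ b`, and
  -- finally that `a = b ≤ n - 1` does not hold.
  have h1 : IsOpen {x : T | ι (n + 1, n + 1) * x ≠ x} := isOpen_ne_fun (by fun_prop) (by fun_prop)
  have h2 : IsOpen {x : T | x * ι (n + 1, n + 1) ≠ x} := isOpen_ne_fun (by fun_prop) (by fun_prop)
  have h3 : IsOpen {x : T | ι (n, n) * x * ι (n + 1, n + 1) ≠ ι (n, n) * x} :=
    isOpen_ne_fun (by fun_prop) (by fun_prop)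
  have h4 : IsOpen {x : T | ι (n + 1, n + 1) * (x * ι (n, n)) ≠ x * ι (n, n)} :=
    isOpen_ne_fun (by fun_prop) (by fun_prop)
  have h5 : IsOpen {x : T | ι (n - 1, n - 1) * x ≠ ι (n - 1, n - 1)} :=
    isOpen_ne_fun (by fun_prop) (by fun_prop)
  refine isOpen_singleton_of_dense hdense ((((h1.inter h2).inter h3).inter h4).inter h5) ?_ ?_
  · simp only [Set.mem_inter_iff, Set.mem_ofPred_eq, ← hhom, ne_eq, hinj.eq_iff, czMul]
    grind
  · rintro ⟨a, b⟩ h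
    simp only [Set.mem_inter_iff, Set.mem_ofPred_eq, ← hhom, ne_eq, hinj.eq_iff, czMul] at h
    grind

lemma isOpen_singleton_range (hinj : Function.Injective ι)
    (hhom : ∀ x y : ℤ × ℤ, ι (czMul x y) = ι x * ι y) (hdense : DenseRange ι) (p : ℤ × ℤ) :
    IsOpen ({ι p} : Set T) := by
  obtain ⟨m, n⟩ := p
  -- For `x = (a, b)`, the first condition says `a ≤ m` and `b - a = n - m`; given this, the second
  -- one excludes `a ≤ m - 1`.
  have h1 : IsOpen {x : T | ι (n, m) * x = ι (n, n)} :=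
    (isOpen_singleton_diag hinj hhom hdense n).preimage (continuous_const_mul (ι (n, m)))
  have h2 : IsOpen {x : T | ι (m - 1, m - 1) * x ≠ ι (m - 1, n - 1)} :=
    isOpen_ne_fun (by fun_prop) (by fun_prop)
  refine isOpen_singleton_of_dense hdense (h1.inter h2) ?_ ?_
  · simp only [Set.mem_inter_iff, Set.mem_ofPred_eq, ← hhom, ne_eq, hinj.eq_iff, czMul]
    grind
  · rintro ⟨a, b⟩ h
    simp only [Set.mem_inter_iff, Set.mem_ofPred_eq, ← hhom, ne_eq, hinj.eq_iff, czMul] at h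
    grind

/-- Holds because `1` is a limit of the idempotents `(n, n)`. -/
lemma eq_of_diag_mul_eq (hinj : Function.Injective ι)
    (hhom : ∀ x y : ℤ × ℤ, ι (czMul x y) = ι x * ι y) (hdense : DenseRange ι) {u v : T}
    (h : ∀ n : ℤ, ι (n, n) * u = ι (n, n) * v) : u = v := by
  by_contra hne
  have h1 : IsOpen {x : T | ι (0, 0) * x = ι (0, 0)} :=
    (isOpen_singleton_range hinj hhom hdense (0, 0)).preimage (continuous_const_mul (ι (0, 0)))
  have h2 : IsOpen {x : T | x * u ≠ x * v} := isOpen_ne_fun (by fun_prop) (by fun_prop)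
  obtain ⟨⟨a, b⟩, hq⟩ := hdense.exists_mem_open (h1.inter h2) ⟨1, by simp, by simpa using hne⟩
  simp only [Set.mem_inter_iff, Set.mem_ofPred_eq, ← hhom, ne_eq, hinj.eq_iff, czMul] at hq
  obtain rfl : a = b := by grind
  exact hq.2 (h a)

lemma exists_isShift (hinj : Function.Injective ι)
    (hhom : ∀ x y : ℤ × ℤ, ι (czMul x y) = ι x * ι y) (hdense : DenseRange ι) {u v : T}
    (huv : u * v = 1) (hvu : v * u = 1) : ∃ k, IsShift ι u k := by
  -- `ι (n, n) * u` is the only solution of `x * v = ι (n, n)`, so it is isolated in `T`.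
  have hmem : ∀ n : ℤ, ∃ q : ℤ, ι (n, n) * u = ι (n, q) := by
    intro n
    have ho : IsOpen {x : T | x * v = ι (n, n)} :=
      (isOpen_singleton_range hinj hhom hdense (n, n)).preimage (continuous_mul_const v)
    obtain ⟨⟨p, q⟩, hpq⟩ := hdense.exists_mem_open ho
      ⟨ι (n, n) * u, by simp [mul_assoc, huv]⟩
    have hpq : ι (p, q) * v = ι (n, n) := hpq
    have hnu : ι (n, n) * u = ι (p, q) := by rw [← hpq, mul_assoc, hvu, mul_one]
    -- `h1` gives `n ≤ p` and `h2` gives `p ≤ n`.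
    have h1 : ι (n, n) * ι (p, q) = ι (p, q) := by
      rw [← hnu, ← mul_assoc, ← hhom]; simp [czMul]
    have h2 : ι (p, p) * ι (n, n) = ι (n, n) := by
      rw [← hpq, ← mul_assoc, ← hhom]; simp [czMul]
    simp only [← hhom, hinj.eq_iff, czMul] at h1 h2
    obtain rfl : p = n := by grind
    exact ⟨q, hnu⟩
  choose q hq using hmem
  -- For `m ≤ n`, apply `u` to `(n, n) = (n, n) * (m, m)`.
  have key : ∀ m n : ℤ, m ≤ n → q n = q m + n - m := by
    intro m n hmn
    have h : ι (n, n) * u = ι (n, n) * (ι (m, m) * u) := by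
      rw [← mul_assoc, ← hhom]
      congr 2
      simp only [czMul]
      grind
    rw [hq, hq, ← hhom, hinj.eq_iff] at h
    simp only [czMul] at h
    grind
  refine ⟨q 0, fun n => ?_⟩
  rw [hq]
  congr 2
  rcases le_total 0 n with h | h
  · have := key _ _ h; omega
  · have := key _ _ h; omega

lemma IsShift.eq (hinj : Function.Injective ι)
    (hhom : ∀ x y : ℤ × ℤ, ι (czMul x y) = ι x * ι y) (hdense : DenseRange ι) {u v : T} {k : ℤ}
    (hu : IsShift ι u k) (hv : IsShift ι v k) : u = v :=
  eq_of_diag_mul_eq hinj hhom hdense fun n => (hu n).trans (hv n).symm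

/-- The subgroup of `ℤ` formed by the shifts that units of `T` induce. -/
def shiftSubgroup (hinj : Function.Injective ι)
    (hhom : ∀ x y : ℤ × ℤ, ι (czMul x y) = ι x * ι y) (hdense : DenseRange ι) :
    AddSubgroup ℤ where
  carrier := {k | ∃ u : Tˣ, IsShift ι (u : T) k}
  zero_mem' := ⟨1, isShift_one⟩
  add_mem' := by
    rintro k l ⟨u, hu⟩ ⟨v, hv⟩
    exact ⟨u * v, hu.mul hhom hv⟩
  neg_mem' := by
    rintro k ⟨u, hu⟩
    obtain ⟨l, hl⟩ := exists_isShift hinj hhom hdense u.inv_mul u.mul_inv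
    have h := hu.mul hhom hl
    rw [u.mul_inv] at h
    have : -k = l := by have := h.unique hinj isShift_one; omega
    exact ⟨u⁻¹, this ▸ hl⟩

lemma units_discrete_and_cyclic (hinj : Function.Injective ι)
    (hhom : ∀ x y : ℤ × ℤ, ι (czMul x y) = ι x * ι y) (hdense : DenseRange ι)
    (H : Set T) (hH : H = {x : T | ∃ y : T, x * y = 1 ∧ y * x = 1}) (hbig : ∃ x ∈ H, x ≠ 1) :
    (∀ x ∈ H, ∃ U : Set T, IsOpen U ∧ U ∩ H = {x}) ∧
    ∃ φ : ℤ → T, Function.Injective φ ∧ Set.range φ = H ∧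
      ∀ m n : ℤ, φ (m + n) = φ m * φ n := by
  have hshift : ∀ x ∈ H, ∃ k, IsShift ι x k := by
    intro x hx
    rw [hH] at hx
    obtain ⟨y, hxy, hyx⟩ := hx
    exact exists_isShift hinj hhom hdense hxy hyx
  refine ⟨fun x hx => ?_, ?_⟩
  · obtain ⟨k, hk⟩ := hshift x hx
    refine ⟨{y | ι (0, 0) * y = ι (0, 0 + k)},
      (isOpen_singleton_range hinj hhom hdense (0, 0 + k)).preimage
        (continuous_const_mul (ι (0, 0))), ?_⟩
    ext y
    constructor
    · rintro ⟨hy0, hyH⟩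
      obtain ⟨l, hl⟩ := hshift y hyH
      have h := (hl 0).symm.trans hy0
      obtain rfl : l = k := by simpa [hinj.eq_iff] using h
      exact hl.eq hinj hhom hdense hk
    · rintro rfl
      exact ⟨hk 0, hx⟩
  · obtain ⟨g, hg⟩ := Int.subgroup_cyclic (shiftSubgroup hinj hhom hdense)
    have hmemS : ∀ k, k ∈ shiftSubgroup hinj hhom hdense ↔ ∃ m : ℤ, m * g = k := by
      intro k
      rw [hg, AddSubgroup.mem_closure_singleton]
      simp
    have hunit : ∀ m : ℤ, ∃ u : Tˣ, IsShift ι (u : T) (m * g) := fun m => (hmemS _).2 ⟨m, rfl⟩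
    have hrep : ∀ x ∈ H, ∃ m : ℤ, IsShift ι x (m * g) := by
      intro x hx
      obtain ⟨k, hk⟩ := hshift x hx
      rw [hH] at hx
      obtain ⟨y, hxy, hyx⟩ := hx
      obtain ⟨m, rfl⟩ := (hmemS k).1 ⟨⟨x, y, hxy, hyx⟩, hk⟩
      exact ⟨m, hk⟩
    have hg0 : g ≠ 0 := by
      rintro rfl
      obtain ⟨x, hx, hx1⟩ := hbig
      obtain ⟨m, hm⟩ := hrep x hx
      rw [mul_zero] at hm
      exact hx1 (hm.eq hinj hhom hdense isShift_one)
    choose u hu using hunit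
    refine ⟨fun m => u m, fun m n hmn => ?_, ?_, fun m n => ?_⟩
    · have h := hu n
      rw [← show (u m : T) = u n from hmn] at h
      exact mul_right_cancel₀ hg0 ((hu m).unique hinj h)
    · ext x
      constructor
      · rintro ⟨m, rfl⟩
        rw [hH]
        exact ⟨↑(u m)⁻¹, (u m).mul_inv, (u m).inv_mul⟩
      · intro hx
        obtain ⟨m, hm⟩ := hrep x hx
        exact ⟨m, (hu m).eq hinj hhom hdense hm⟩
    · refine (hu (m + n)).eq hinj hhom hdense ?_
      rw [add_mul]
      exact (hu m).mul hhom (hu n)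

end

theorem stmt_13 {T : Type*} [TopologicalSpace T] [T2Space T] (mul : T → T → T) (one : T)
    (hassoc : ∀ a b c : T, mul (mul a b) c = mul a (mul b c))
    (hcont : Continuous fun p : T × T => mul p.1 p.2)
    (hone : ∀ x : T, mul one x = x ∧ mul x one = x)
    (ι : ℤ × ℤ → T) (hinj : Function.Injective ι)
    (hhom : ∀ x y : ℤ × ℤ, ι (czMul x y) = mul (ι x) (ι y))
    (hdense : DenseRange ι)
    (H : Set T) (hH : H = {x : T | ∃ y : T, mul x y = one ∧ mul y x = one})
    (hbig : ∃ x ∈ H, x ≠ one) :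
    (∀ x ∈ H, ∃ U : Set T, IsOpen U ∧ U ∩ H = {x}) ∧
    ∃ φ : ℤ → T, Function.Injective φ ∧ Set.range φ = H ∧
      ∀ m n : ℤ, φ (m + n) = mul (φ m) (φ n) := by
  let _ : Monoid T :=
    { mul := mul
      one := one
      mul_assoc := hassoc
      one_mul := fun x => (hone x).1
      mul_one := fun x => (hone x).2 }
  have : ContinuousMul T := ⟨hcont⟩
  exact units_discrete_and_cyclic hinj hhom hdense H hH hbig
end

section
/- Let T be a Hausdorff topological space with a jointly continuous associative multiplication and a two-sided identity 1_T, and let ι : C_Z → T be an injective map with ι(x·y) = ι(x)·ι(y) for all x,y ∈ C_Z whose image is dense in T. Then no element x ≠ 1_T of the group of units H(1_T) = {x ∈ T : ∃ y ∈ T, x·y = y·x = 1_T} is topologically periodic: there exists an open neighbourhood U of 1_T in T such that xⁿ ∉ U for every positive integer n. -/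
/-- `iterMul mul x n` is the `(n+1)`-st power of `x` with respect to `mul`. -/
def iterMul {T : Type*} (mul : T → T → T) (x : T) : ℕ → T
  | 0 => x
  | n + 1 => mul (iterMul mul x n) x

theorem czMul_sub (p q : ℤ × ℤ) :
    (czMul p q).1 - (czMul p q).2 = (p.1 - p.2) + (q.1 - q.2) := by
  unfold czMul
  split_ifs <;> simp only <;> omega

theorem iterMul_czMul_sub (p : ℤ × ℤ) (n : ℕ) :
    (iterMul czMul p n).1 - (iterMul czMul p n).2 = (n + 1) * (p.1 - p.2) := by
  induction n with
  | zero => simp [iterMul]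
  | succ n ih =>
    simp only [iterMul]
    rw [czMul_sub, ih]
    push_cast
    ring

/-- If `a < b`, then `e₀ (a, b) e₀ = (c, d)` with `c ≥ 0` and `d - c = b - a ≥ 1`, so `d ≥ 1` and
right multiplication by `e₁` fixes it; here `eₙ = (n, n)`. -/
theorem czMul_right_eq {p : ℤ × ℤ} (h : p.1 < p.2) :
    czMul (czMul (0, 0) p) (1, 1) = czMul (czMul (0, 0) p) (0, 0) := by
  obtain ⟨a, b⟩ := p
  simp only at h
  unfold czMul
  ext <;> simp only <;> split_ifs <;> simp only at * <;> omega

/-- The mirror image of `czMul_right_eq`. -/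
theorem czMul_left_eq {p : ℤ × ℤ} (h : p.2 < p.1) :
    czMul (czMul (1, 1) p) (0, 0) = czMul (czMul (0, 0) p) (0, 0) := by
  obtain ⟨a, b⟩ := p
  simp only at h
  unfold czMul
  ext <;> simp only <;> split_ifs <;> simp only at * <;> omega

theorem czMul_diag (a : ℤ) : czMul (a, a) (a, a) = (a, a) := by
  simp [czMul]

theorem continuous_iterMul {T : Type*} [TopologicalSpace T] {mul : T → T → T}
    (hcont : Continuous fun p : T × T => mul p.1 p.2) (n : ℕ) :
    Continuous fun t => iterMul mul t n := by
  induction n with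
  | zero => exact continuous_id
  | succ n ih => exact hcont.comp (ih.prodMk continuous_id)

theorem iterMul_hom {T : Type*} {mul : T → T → T} {ι : ℤ × ℤ → T}
    (hhom : ∀ x y : ℤ × ℤ, ι (czMul x y) = mul (ι x) (ι y)) (p : ℤ × ℤ) (n : ℕ) :
    iterMul mul (ι p) n = ι (iterMul czMul p n) := by
  induction n with
  | zero => rfl
  | succ n ih => simp only [iterMul, ih, hhom]

/-- Some neighbourhood of the identity meets the image of `C_Z` only in idempotents. -/
theorem exists_nhd_one_diag {T : Type*} [TopologicalSpace T] [T2Space T] {mul : T → T → T} {one : T}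
    (hcont : Continuous fun p : T × T => mul p.1 p.2)
    (hone : ∀ x : T, mul one x = x ∧ mul x one = x)
    {ι : ℤ × ℤ → T} (hinj : Function.Injective ι)
    (hhom : ∀ x y : ℤ × ℤ, ι (czMul x y) = mul (ι x) (ι y)) :
    ∃ U : Set T, IsOpen U ∧ one ∈ U ∧ ∀ p, ι p ∈ U → p.1 = p.2 := by
  have hc : ∀ u v : T, Continuous fun t => mul (mul u t) v := fun u v =>
    hcont.comp ((hcont.comp (continuous_const.prodMk continuous_id)).prodMk continuous_const)
  -- `U` is the set of `t` such that `e₀ t e₀` differs from both `e₀ t e₁` and `e₁ t e₀`.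
  refine ⟨{t | mul (mul (ι (0, 0)) t) (ι (1, 1)) ≠ mul (mul (ι (0, 0)) t) (ι (0, 0))} ∩
    {t | mul (mul (ι (1, 1)) t) (ι (0, 0)) ≠ mul (mul (ι (0, 0)) t) (ι (0, 0))},
    (isOpen_ne_fun (hc _ _) (hc _ _)).inter (isOpen_ne_fun (hc _ _) (hc _ _)), ?_, ?_⟩
  · constructor
    · simp only [Set.mem_ofPred_eq, (hone _).2, ← hhom]
      exact hinj.ne (by decide)
    · simp only [Set.mem_ofPred_eq, (hone _).2, ← hhom]
      exact hinj.ne (by decide)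
  · rintro p ⟨h1, h2⟩
    simp only [Set.mem_ofPred_eq, ← hhom] at h1 h2
    rcases lt_trichotomy p.1 p.2 with h | h | h
    · exact absurd (congrArg ι (czMul_right_eq h)) h1
    · exact h
    · exact absurd (congrArg ι (czMul_left_eq h)) h2

theorem stmt_14 {T : Type*} [TopologicalSpace T] [T2Space T] (mul : T → T → T) (one : T)
    (hassoc : ∀ a b c : T, mul (mul a b) c = mul a (mul b c))
    (hcont : Continuous fun p : T × T => mul p.1 p.2)
    (hone : ∀ x : T, mul one x = x ∧ mul x one = x)
    (ι : ℤ × ℤ → T) (hinj : Function.Injective ι)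
    (hhom : ∀ x y : ℤ × ℤ, ι (czMul x y) = mul (ι x) (ι y))
    (hdense : DenseRange ι)
    (x : T) (hx : ∃ y : T, mul x y = one ∧ mul y x = one) (hxone : x ≠ one) :
    ∃ U : Set T, IsOpen U ∧ one ∈ U ∧ ∀ n : ℕ, iterMul mul x n ∉ U := by
  obtain ⟨U, hUo, hU1, hU⟩ := exists_nhd_one_diag hcont hone hinj hhom
  refine ⟨U, hUo, hU1, fun n hn => ?_⟩
  obtain ⟨y, hxy, -⟩ := hx
  obtain ⟨V, W, hVo, hWo, hxV, hyW, hVW⟩ := isOpen_prod_iff.1 (hUo.preimage hcont) x y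
    (by simpa only [Set.mem_preimage, hxy] using hU1)
  obtain ⟨q, hq⟩ := hdense.exists_mem_open hWo ⟨y, hyW⟩
  -- The difference of coordinates is constant on `V`, since `V * ι q` lies in `U`.
  have hV : ∀ p, ι p ∈ V → (p.1 - p.2) + (q.1 - q.2) = 0 := fun p hp => by
    have h := hVW (Set.mk_mem_prod hp hq)
    simp only [Set.mem_preimage, ← hhom] at h
    rw [← czMul_sub, hU _ h, sub_self]
  by_cases hk : q.1 = q.2
  · have hcl : IsClosed {t : T | mul t t = t} :=
      isClosed_eq (hcont.comp (continuous_id.prodMk continuous_id)) continuous_id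
    have hxx : mul x x = x := by
      by_contra hne
      obtain ⟨⟨a, b⟩, hpV, hpn⟩ := hdense.exists_mem_open (hVo.inter hcl.isOpen_compl)
        ⟨x, hxV, hne⟩
      have hab : a = b := by
        have := hV _ hpV
        simp only at this
        omega
      subst hab
      exact hpn (by simp only [Set.mem_ofPred_eq, ← hhom, czMul_diag])
    apply hxone
    calc x = mul x (mul x y) := by rw [hxy, (hone x).2]
      _ = one := by rw [← hassoc, hxx, hxy]
  · obtain ⟨p, hpV, hpU⟩ := hdense.exists_mem_open
      (hVo.inter (hUo.preimage (continuous_iterMul hcont n))) ⟨x, hxV, hn⟩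
    simp only [Set.mem_preimage, iterMul_hom hhom] at hpU
    have h1 := iterMul_czMul_sub p n
    rw [hU _ hpU, sub_self] at h1
    have h2 := hV p hpV
    rcases mul_eq_zero.1 h1.symm with h | h <;> omega
end

section
/- Let T be a Hausdorff topological space with a jointly continuous associative multiplication and a two-sided identity 1_T, and let ι : C_Z → T be an injective map with ι(x·y) = ι(x)·ι(y) for all x,y ∈ C_Z whose image is dense in T. Define L = {x ∈ T ∖ ι(C_Z) : ∃ y ∈ C_Z, x·ι(y) ∈ ι(C_Z)} and R = {x ∈ T ∖ ι(C_Z) : ∃ y ∈ C_Z, ι(y)·x ∈ ι(C_Z)}. Then L = R. -/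
/-- Every point of a dense copy of `C_Z` in a Hausdorff space with jointly continuous multiplication
is isolated in the whole space. -/
theorem isOpen_singleton_image {T : Type*} [TopologicalSpace T] [T2Space T] (mul : T → T → T)
    (hcont : Continuous fun p : T × T => mul p.1 p.2)
    (ι : ℤ × ℤ → T) (hinj : Function.Injective ι)
    (hhom : ∀ x y : ℤ × ℤ, ι (czMul x y) = mul (ι x) (ι y))
    (hdense : DenseRange ι) (p q : ℤ) : IsOpen {ι (p, q)} := by
  have hr : ∀ y : T, Continuous fun z => mul z y := fun y =>
    hcont.comp (continuous_id.prodMk continuous_const)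
  have hl : ∀ y : T, Continuous fun z => mul y z := fun y =>
    hcont.comp (continuous_const.prodMk continuous_id)
  -- For `z = ι (c, d)` the five conditions say, in order: `d ≤ q`; `c ≤ p`; given these,
  -- `c - d ≤ p - q`; `c - d ≥ p - q`; and `(c, d)` is not strictly below `(p, q)` on its diagonal.
  let W : Set T := {z | mul z (ι (q + 1, q + 1)) ≠ z} ∩ {z | mul (ι (p + 1, p + 1)) z ≠ z} ∩
    {z | mul (ι (p + 1, p + 1)) (mul z (ι (q, q))) ≠ mul z (ι (q, q))} ∩
    {z | mul (mul (ι (p, p)) z) (ι (q + 1, q + 1)) ≠ mul (ι (p, p)) z} ∩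
    {z | mul z (ι (q - 1, q - 1)) ≠ ι (p - 1, q - 1)}
  have hW : IsOpen W :=
    ((((isOpen_ne_fun (hr _) continuous_id).inter (isOpen_ne_fun (hl _) continuous_id)).inter
      (isOpen_ne_fun ((hl _).comp (hr _)) (hr _))).inter
      (isOpen_ne_fun ((hr _).comp (hl _)) (hl _))).inter
      (isOpen_ne_fun (hr _) continuous_const)
  have hmem : ∀ c d : ℤ, ι (c, d) ∈ W ↔ (c, d) = (p, q) := by
    intro c d
    simp only [W, Set.mem_inter_iff, Set.mem_ofPred_eq, ← hhom, hinj.ne_iff, czMul, Prod.mk.injEq,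
      ne_eq]
    constructor
    · rintro ⟨⟨⟨⟨h1, h2⟩, h3⟩, h4⟩, h5⟩
      grind
    · rintro ⟨rfl, rfl⟩
      grind
  have hWeq : W = {ι (p, q)} := by
    apply Set.Subset.antisymm
    · intro z hz
      by_contra hne
      obtain ⟨⟨c, d⟩, hy, hy'⟩ :=
        hdense.exists_mem_open (hW.inter isOpen_compl_singleton) ⟨z, hz, hne⟩
      exact hy' (congrArg ι ((hmem c d).1 hy))
    · rintro _ rfl
      exact (hmem p q).2 rfl
  exact hWeq ▸ hW

/-- A point outside the image which some right translation moves into the image is also moved into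
the image by some left translation. -/
theorem exists_left_mul_mem {T : Type*} [TopologicalSpace T] [T2Space T] (mul : T → T → T)
    (hassoc : ∀ a b c : T, mul (mul a b) c = mul a (mul b c))
    (hcont : Continuous fun p : T × T => mul p.1 p.2)
    (ι : ℤ × ℤ → T) (hinj : Function.Injective ι)
    (hhom : ∀ x y : ℤ × ℤ, ι (czMul x y) = mul (ι x) (ι y))
    (hdense : DenseRange ι) (x : T) (hx : x ∉ Set.range ι)
    (h : ∃ y : ℤ × ℤ, mul x (ι y) ∈ Set.range ι) :
    ∃ y : ℤ × ℤ, mul (ι y) x ∈ Set.range ι := by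
  obtain ⟨⟨a, b⟩, w, hw⟩ := h
  obtain ⟨⟨p, q⟩, hpq⟩ : ∃ v, v = czMul w (b, a) := ⟨_, rfl⟩
  have hxa : mul x (ι (a, a)) = ι (p, q) := by
    have hab : czMul (a, b) (b, a) = (a, a) := by simp [czMul]
    rw [hpq, hhom, hw, hassoc, ← hhom, hab]
  have hV : IsOpen ({z | mul z (ι (a, a)) = ι (p, q)} ∩ {ι (p, q)}ᶜ) :=
    ((isOpen_singleton_image mul hcont ι hinj hhom hdense p q).preimage
      (hcont.comp (continuous_id.prodMk continuous_const))).inter isOpen_compl_singleton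
  have hC : IsClosed {z | mul (ι (p, p)) z = ι (p, a)} :=
    isClosed_eq (hcont.comp (continuous_const.prodMk continuous_id)) continuous_const
  refine ⟨(p, p), (p, a), Eq.symm ?_⟩
  refine closure_minimal ?_ hC (hdense.open_subset_closure_inter hV
    ⟨hxa, fun hxe => hx ⟨_, (Set.mem_singleton_iff.1 hxe).symm⟩⟩)
  rintro _ ⟨⟨h1, h2⟩, ⟨c, d⟩, rfl⟩
  simp only [Set.mem_ofPred_eq, ← hhom, hinj.eq_iff, czMul, Set.mem_compl_iff,
    Set.mem_singleton_iff, Prod.mk.injEq] at h1 h2 ⊢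
  grind

/-- Swapping coordinates is an anti-automorphism of `C_Z`. -/
theorem czMul_swap (x y : ℤ × ℤ) : (czMul x y).swap = czMul y.swap x.swap := by
  obtain ⟨a, b⟩ := x
  obtain ⟨c, d⟩ := y
  simp only [czMul, Prod.swap]
  grind

theorem stmt_15 {T : Type*} [TopologicalSpace T] [T2Space T] (mul : T → T → T) (one : T)
    (hassoc : ∀ a b c : T, mul (mul a b) c = mul a (mul b c))
    (hcont : Continuous fun p : T × T => mul p.1 p.2)
    (hone : ∀ x : T, mul one x = x ∧ mul x one = x)
    (ι : ℤ × ℤ → T) (hinj : Function.Injective ι)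
    (hhom : ∀ x y : ℤ × ℤ, ι (czMul x y) = mul (ι x) (ι y))
    (hdense : DenseRange ι) :
    {x : T | x ∉ Set.range ι ∧ ∃ y : ℤ × ℤ, mul x (ι y) ∈ Set.range ι} =
      {x : T | x ∉ Set.range ι ∧ ∃ y : ℤ × ℤ, mul (ι y) x ∈ Set.range ι} := by
  have hrange : Set.range (ι ∘ Prod.swap) = Set.range ι := Prod.swap_surjective.range_comp ι
  ext x
  refine and_congr_right fun hx =>
    ⟨exists_left_mul_mem mul hassoc hcont ι hinj hhom hdense x hx, fun ⟨y, hy⟩ => ?_⟩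
  obtain ⟨y', hy'⟩ := exists_left_mul_mem (fun a b => mul b a)
    (fun a b c => (hassoc c b a).symm) (hcont.comp continuous_swap) (ι ∘ Prod.swap)
    (hinj.comp Prod.swap_injective)
    (fun u v => by simp only [Function.comp_apply, czMul_swap, hhom])
    (by rw [DenseRange, hrange]; exact hdense) x (by rwa [hrange])
    ⟨y.swap, by rw [hrange]; simpa using hy⟩
  rw [hrange] at hy'
  exact ⟨y'.swap, hy'⟩
end

section
/- Let T be a Hausdorff topological space with a jointly continuous associative multiplication and a two-sided identity 1_T, and let ι : C_Z → T be an injective map with ι(x·y) = ι(x)·ι(y) for all x,y ∈ C_Z whose image is dense in T. Define L = {x ∈ T ∖ ι(C_Z) : ∃ y ∈ C_Z, x·ι(y) ∈ ι(C_Z)} and ↑C_Z = ι(C_Z) ∪ L. If the set I = T ∖ ↑C_Z is nonempty, then I is a two-sided ideal of T: t·x ∈ I and x·t ∈ I for all x ∈ I and t ∈ T. -/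
section

variable {T : Type*} [TopologicalSpace T] [T2Space T] {mul : T → T → T} {ι : ℤ × ℤ → T}

theorem isOpen_singleton_cz
    (hcont : Continuous fun p : T × T => mul p.1 p.2) (hinj : Function.Injective ι)
    (hhom : ∀ x y : ℤ × ℤ, ι (czMul x y) = mul (ι x) (ι y)) (hdense : DenseRange ι)
    (c : ℤ × ℤ) : IsOpen ({ι c} : Set T) := by
  obtain ⟨p, q⟩ := c
  have hl : ∀ a : T, Continuous fun x => mul a x := fun a =>
    hcont.comp (continuous_const.prodMk continuous_id)
  have hr : ∀ a : T, Continuous fun x => mul x a := fun a =>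
    hcont.comp (continuous_id.prodMk continuous_const)
  let g : T → T := fun x => mul (mul (ι (p - 1, p - 1)) x) (ι (q - 1, q - 1))
  have hg : Continuous g := (hr _).comp (hl _)
  let W : Set T := {x | mul (ι (p + 1, p + 1)) x ≠ x} ∩ {x | mul x (ι (q + 1, q + 1)) ≠ x} ∩
    {ι (p - 1, q)}ᶜ ∩ {ι (p - 1, q - 1)}ᶜ ∩ {ι (p, q - 1)}ᶜ
  have hW : IsOpen W :=
    ((((isOpen_ne_fun (hl _) continuous_id).inter (isOpen_ne_fun (hr _) continuous_id)).inter
      isOpen_compl_singleton).inter isOpen_compl_singleton).inter isOpen_compl_singleton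
  have hO : IsOpen (g ⁻¹' W) := hW.preimage hg
  have key : ∀ x : ℤ × ℤ, ι x ∈ g ⁻¹' W ↔ x = (p, q) := by
    rintro ⟨a, b⟩
    simp only [g, W, Set.mem_preimage, Set.mem_inter_iff, Set.mem_ofPred_eq, Set.mem_compl_iff,
      Set.mem_singleton_iff, ← hhom, hinj.eq_iff, ne_eq, czMul]
    grind
  have hsub : g ⁻¹' W = {ι (p, q)} := by
    apply Set.Subset.antisymm
    · refine (hdense.open_subset_closure_inter hO).trans ?_
      rw [← closure_singleton (x := ι (p, q))]
      apply closure_mono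
      rintro _ ⟨h, x, rfl⟩
      rw [(key x).1 h]
      rfl
    · rintro _ rfl
      exact (key _).2 rfl
  rwa [hsub] at hO

theorem left_of_right
    (hcont : Continuous fun p : T × T => mul p.1 p.2) (hinj : Function.Injective ι)
    (hhom : ∀ x y : ℤ × ℤ, ι (czMul x y) = mul (ι x) (ι y)) (hdense : DenseRange ι)
    {x : T} (h : ∃ y, mul x (ι y) ∈ Set.range ι) : ∃ z, mul (ι z) x ∈ Set.range ι := by
  obtain ⟨⟨u, v⟩, ⟨p, q⟩, h⟩ := h
  have hV : IsOpen {t | mul t (ι (u, v)) ∈ ({ι (p, q)} : Set T)} :=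
    (isOpen_singleton_cz hcont hinj hhom hdense (p, q)).preimage
      (hcont.comp (continuous_id.prodMk continuous_const))
  have hF : IsClosed {t | mul (ι (p, p)) t = ι (p, q + u - v)} :=
    isClosed_eq (hcont.comp (continuous_const.prodMk continuous_id)) continuous_const
  refine ⟨(p, p), (p, q + u - v), Eq.symm ?_⟩
  refine closure_minimal ?_ hF (hdense.open_subset_closure_inter hV h.symm)
  rintro _ ⟨h, ⟨a, b⟩, rfl⟩
  simp only [Set.mem_ofPred_eq, Set.mem_singleton_iff, ← hhom, hinj.eq_iff, czMul] at h ⊢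
  grind

theorem right_of_left
    (hcont : Continuous fun p : T × T => mul p.1 p.2) (hinj : Function.Injective ι)
    (hhom : ∀ x y : ℤ × ℤ, ι (czMul x y) = mul (ι x) (ι y)) (hdense : DenseRange ι)
    {x : T} (h : ∃ z, mul (ι z) x ∈ Set.range ι) : ∃ y, mul x (ι y) ∈ Set.range ι := by
  obtain ⟨⟨u, v⟩, ⟨p, q⟩, h⟩ := h
  have hV : IsOpen {t | mul (ι (u, v)) t ∈ ({ι (p, q)} : Set T)} :=
    (isOpen_singleton_cz hcont hinj hhom hdense (p, q)).preimage
      (hcont.comp (continuous_const.prodMk continuous_id))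
  have hF : IsClosed {t | mul t (ι (q, q)) = ι (p + v - u, q)} :=
    isClosed_eq (hcont.comp (continuous_id.prodMk continuous_const)) continuous_const
  refine ⟨(q, q), (p + v - u, q), Eq.symm ?_⟩
  refine closure_minimal ?_ hF (hdense.open_subset_closure_inter hV h.symm)
  rintro _ ⟨h, ⟨a, b⟩, rfl⟩
  simp only [Set.mem_ofPred_eq, Set.mem_singleton_iff, ← hhom, hinj.eq_iff, czMul] at h ⊢
  grind

end

theorem stmt_16 {T : Type*} [TopologicalSpace T] [T2Space T] (mul : T → T → T) (one : T)
    (hassoc : ∀ a b c : T, mul (mul a b) c = mul a (mul b c))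
    (hcont : Continuous fun p : T × T => mul p.1 p.2)
    (hone : ∀ x : T, mul one x = x ∧ mul x one = x)
    (ι : ℤ × ℤ → T) (hinj : Function.Injective ι)
    (hhom : ∀ x y : ℤ × ℤ, ι (czMul x y) = mul (ι x) (ι y))
    (hdense : DenseRange ι)
    (L I : Set T)
    (hL : L = {x : T | x ∉ Set.range ι ∧ ∃ y : ℤ × ℤ, mul x (ι y) ∈ Set.range ι})
    (hI : I = (Set.range ι ∪ L)ᶜ) (hne : I.Nonempty) :
    ∀ x ∈ I, ∀ t : T, mul t x ∈ I ∧ mul x t ∈ I := by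
  have hmem : ∀ x, x ∈ I ↔ ¬ ∃ y, mul x (ι y) ∈ Set.range ι := by
    intro x
    rw [hI, hL, Set.mem_compl_iff, not_iff_not]
    constructor
    · rintro (⟨a, rfl⟩ | h)
      · exact ⟨a, czMul a a, hhom a a⟩
      · exact h.2
    · intro h
      by_cases hx : x ∈ Set.range ι
      · exact Or.inl hx
      · exact Or.inr ⟨hx, h⟩
  intro x hx t
  rw [hmem] at hx
  rw [hmem, hmem]
  refine ⟨fun h => hx ?_, fun h => hx ?_⟩
  · obtain ⟨y, c, h⟩ := h
    rw [hassoc] at h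
    have hV : IsOpen {s | mul s (mul x (ι y)) ∈ ({ι c} : Set T)} :=
      (isOpen_singleton_cz hcont hinj hhom hdense c).preimage
        (hcont.comp (continuous_id.prodMk continuous_const))
    obtain ⟨s, hs⟩ := hdense.exists_mem_open hV ⟨t, h.symm⟩
    obtain ⟨z, d, hd⟩ := left_of_right hcont hinj hhom hdense (x := mul (ι s) x)
      ⟨y, c, by rw [hassoc]; exact hs.symm⟩
    exact right_of_left hcont hinj hhom hdense ⟨czMul z s, d, by rw [hd, hhom, hassoc]⟩
  · obtain ⟨z, c, h⟩ := left_of_right hcont hinj hhom hdense h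
    rw [← hassoc] at h
    have hV : IsOpen {s | mul (mul (ι z) x) s ∈ ({ι c} : Set T)} :=
      (isOpen_singleton_cz hcont hinj hhom hdense c).preimage
        (hcont.comp (continuous_const.prodMk continuous_id))
    obtain ⟨s, hs⟩ := hdense.exists_mem_open hV ⟨t, h.symm⟩
    obtain ⟨w, d, hd⟩ := left_of_right hcont hinj hhom hdense (x := mul (ι z) x)
      ⟨s, c, hs.symm⟩
    exact right_of_left hcont hinj hhom hdense ⟨czMul w z, d, by rw [hd, hhom, hassoc]⟩
end

section
/- Let T be a Hausdorff topological space with a jointly continuous associative multiplication such that every x ∈ T has a unique element x⁻¹ with x·x⁻¹·x = x and x⁻¹·x·x⁻¹ = x⁻¹, and such that the map x ↦ x⁻¹ is continuous (a topological inverse semigroup). Let ι : C_Z → T be an injective map with ι(x·y) = ι(x)·ι(y) for all x,y ∈ C_Z whose image is dense in T. Define L = {x ∈ T ∖ ι(C_Z) : ∃ y ∈ C_Z, x·ι(y) ∈ ι(C_Z)} and ↑C_Z = ι(C_Z) ∪ L, and suppose I = T ∖ ↑C_Z is nonempty. Then I contains exactly one idempotent ē, and I is a subgroup of T with identity ē: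 I is closed under multiplication, ē·x = x·ē = x for every x ∈ I, and x·x⁻¹ = x⁻¹·x = ē with x⁻¹ ∈ I for every x ∈ I. -/
open Filter Topology

/-- `T` is a topological inverse semigroup with inversion `inv`, containing the extended bicyclic
semigroup densely through `ι`. (Joint continuity of multiplication and the Hausdorff property are
carried by type classes.) -/
structure DenseExt {T : Type*} [Semigroup T] [TopologicalSpace T] (inv : T → T)
    (ι : ℤ × ℤ → T) : Prop where
  hinv : ∀ x : T, x * inv x * x = x ∧ inv x * x * inv x = inv x
  uniq : ∀ x y : T, (x * y * x = x ∧ y * x * y = y) → y = inv x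
  cont : Continuous inv
  inj : Function.Injective ι
  hom : ∀ x y : ℤ × ℤ, ι (czMul x y) = ι x * ι y
  dense : DenseRange ι

namespace DenseExt

variable {T : Type*} [Semigroup T] [TopologicalSpace T]

/-- `f` lies below every idempotent of `C_Z`. -/
def Low (ι : ℤ × ℤ → T) (f : T) : Prop := ∀ n : ℤ, f * ι (n, n) = f ∧ ι (n, n) * f = f

/-- `f` lies above every idempotent of `C_Z`. -/
def High (ι : ℤ × ℤ → T) (f : T) : Prop :=
  ∀ n : ℤ, f * ι (n, n) = ι (n, n) ∧ ι (n, n) * f = ι (n, n)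

variable {inv : T → T} {ι : ℤ × ℤ → T}

section algebra

lemma e_mul (h : DenseExt inv ι) (m n : ℤ) : ι (m, m) * ι (n, n) = ι (max m n, max m n) := by
  rw [← h.hom]
  congr 1
  unfold czMul
  ext <;> dsimp only <;> split_ifs <;> dsimp only <;> omega

lemma e_inj (h : DenseExt inv ι) {m n : ℤ} (hmn : ι (m, m) = ι (n, n)) : m = n :=
  (Prod.mk.inj (h.inj hmn)).1

lemma mul_swap (h : DenseExt inv ι) (a b : ℤ) : ι (a, b) * ι (b, a) = ι (a, a) := by
  rw [← h.hom]
  simp [czMul]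

lemma e_mul_left (h : DenseExt inv ι) (a b : ℤ) : ι (a, a) * ι (a, b) = ι (a, b) := by
  rw [← h.hom]
  simp [czMul]

lemma mul_e_right (h : DenseExt inv ι) (a b : ℤ) : ι (a, b) * ι (b, b) = ι (a, b) := by
  rw [← h.hom]
  simp [czMul]

/-- Moving an idempotent of `C_Z` across an element, from right to left. -/
lemma mul_e (h : DenseExt inv ι) (c d n : ℤ) :
    ι (c, d) * ι (n, n) = ι (c - d + max n d, c - d + max n d) * ι (c, d) := by
  rw [← h.hom, ← h.hom]
  congr 1
  unfold czMul
  ext <;> dsimp only <;> split_ifs <;> dsimp only <;> omega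

/-- Moving an idempotent of `C_Z` across an element, from left to right. -/
lemma e_mul' (h : DenseExt inv ι) (c d n : ℤ) :
    ι (n, n) * ι (d, c) = ι (d, c) * ι (c - d + max n d, c - d + max n d) := by
  rw [← h.hom, ← h.hom]
  congr 1
  unfold czMul
  ext <;> dsimp only <;> split_ifs <;> dsimp only <;> omega

lemma inv_ι (h : DenseExt inv ι) (a b : ℤ) : inv (ι (a, b)) = ι (b, a) := by
  symm
  apply h.uniq
  rw [h.mul_swap, h.mul_swap, h.e_mul_left, h.e_mul_left]
  exact ⟨rfl, rfl⟩

lemma inv_inv' (h : DenseExt inv ι) (x : T) : inv (inv x) = x :=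
  (h.uniq _ _ ⟨(h.hinv x).2, (h.hinv x).1⟩).symm

lemma inv_idem (h : DenseExt inv ι) {f : T} (hf : f * f = f) : inv f = f :=
  (h.uniq f f (by simp [hf])).symm

lemma idem_left (h : DenseExt inv ι) (x : T) : inv x * x * (inv x * x) = inv x * x := by
  rw [← mul_assoc, (h.hinv x).2]

lemma idem_right (h : DenseExt inv ι) (x : T) : x * inv x * (x * inv x) = x * inv x := by
  rw [← mul_assoc, (h.hinv x).1]

lemma not_low_e (h : DenseExt inv ι) (n : ℤ) : ¬ Low ι (ι (n, n)) := by
  intro hl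
  have h1 := (hl (n + 1)).1
  rw [h.e_mul] at h1
  have := h.e_inj h1
  omega

lemma neBot (h : DenseExt inv ι) (x : T) : (comap ι (𝓝 x)).NeBot := by
  refine comap_neBot fun t ht => ?_
  obtain ⟨_, hy, a, rfl⟩ := mem_closure_iff_nhds.1 (h.dense x) t ht
  exact ⟨a, hy⟩

end algebra

section topology

variable [ContinuousMul T]

lemma tendsto_snd (h : DenseExt inv ι) (x : T) :
    Tendsto (fun p : ℤ × ℤ => ι (p.2, p.2)) (comap ι (𝓝 x)) (𝓝 (inv x * x)) := by
  have h1 : Tendsto ι (comap ι (𝓝 x)) (𝓝 x) := tendsto_comap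
  refine (((h.cont.tendsto x).comp h1).mul h1).congr ?_
  rintro ⟨a, b⟩
  simp only [Function.comp, h.inv_ι, h.mul_swap]

lemma tendsto_fst (h : DenseExt inv ι) (x : T) :
    Tendsto (fun p : ℤ × ℤ => ι (p.1, p.1)) (comap ι (𝓝 x)) (𝓝 (x * inv x)) := by
  have h1 : Tendsto ι (comap ι (𝓝 x)) (𝓝 x) := tendsto_comap
  refine (h1.mul ((h.cont.tendsto x).comp h1)).congr ?_
  rintro ⟨a, b⟩
  simp only [Function.comp, h.inv_ι, h.mul_swap]

lemma tendsto_idem (h : DenseExt inv ι) {f : T} (hf : f * f = f) :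
    Tendsto (fun p : ℤ × ℤ => ι (p.2, p.2)) (comap ι (𝓝 f)) (𝓝 f) := by
  have := h.tendsto_snd f
  rwa [h.inv_idem hf, hf] at this

variable [T2Space T]

/-- A convergent net of idempotents of `C_Z` has indices that are eventually constant, or tend to
`+∞`, or tend to `-∞`: the condition `f * e n ≠ e n` forces `k > n` eventually, the condition
`f * e n ≠ f` forces `k < n` eventually, and one of the two holds unless `f = e n`. -/
lemma trichotomy (h : DenseExt inv ι) {α : Type*} {F : Filter α} [F.NeBot] {k : α → ℤ} {f : T}
    (hk : Tendsto (fun i => ι (k i, k i)) F (𝓝 f)) :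
    (∃ m, f = ι (m, m) ∧ ∀ᶠ i in F, k i = m) ∨ Tendsto k F atTop ∨ Tendsto k F atBot := by
  have hmul : ∀ n, Tendsto (fun i => ι (k i, k i) * ι (n, n)) F (𝓝 (f * ι (n, n))) :=
    fun n => hk.mul tendsto_const_nhds
  have hgt : ∀ n, f * ι (n, n) ≠ ι (n, n) → ∀ᶠ i in F, n < k i := by
    intro n hn
    filter_upwards [(hmul n).eventually_ne hn] with i hi
    by_contra hc
    rw [h.e_mul, max_eq_right (not_lt.1 hc)] at hi
    exact hi rfl
  have hlt : ∀ n, f * ι (n, n) ≠ f → ∀ᶠ i in F, k i < n := by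
    intro n hn
    filter_upwards [((hmul n).prodMk_nhds hk).eventually
      ((isClosed_diagonal.isOpen_compl).mem_nhds (by simpa using hn))] with i hi
    by_contra hc
    rw [h.e_mul, max_eq_left (not_lt.1 hc)] at hi
    exact hi rfl
  by_cases hf : ∃ m, f = ι (m, m)
  · obtain ⟨m, rfl⟩ := hf
    refine Or.inl ⟨m, rfl, ?_⟩
    have h1 := hgt (m - 1) (by
      rw [h.e_mul]; intro hc; have := h.e_inj hc; omega)
    have h2 := hlt (m + 1) (by
      rw [h.e_mul]; intro hc; have := h.e_inj hc; omega)
    filter_upwards [h1, h2] with i hi1 hi2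
    omega
  · right
    push Not at hf
    have hor : ∀ n, (∀ᶠ i in F, n < k i) ∨ (∀ᶠ i in F, k i < n) := by
      intro n
      by_cases hn : f * ι (n, n) = ι (n, n)
      · exact Or.inr (hlt n (by rw [hn]; exact (hf n).symm))
      · exact Or.inl (hgt n hn)
    by_cases hall : ∃ n, ∀ᶠ i in F, n < k i
    · left
      obtain ⟨n, hn⟩ := hall
      rw [tendsto_atTop]
      intro b
      rcases le_total b n with hb | hb
      · filter_upwards [hn] with i hi
        omega
      -- No net of integers eventually lies strictly between `b` and `b + 1`, so the alternative
      -- `n < k` propagates upwards.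
      have key : ∀ᶠ i in F, b < k i := by
        induction b, hb using Int.leInduction with
        | base => exact hn
        | succ b hb ih =>
          rcases hor (b + 1) with h1 | h1
          · exact h1
          · obtain ⟨i, hi1, hi2⟩ := (ih.and h1).exists
            omega
      filter_upwards [key] with i hi
      omega
    · right
      rw [not_exists] at hall
      rw [tendsto_atBot]
      intro b
      filter_upwards [(hor b).resolve_left (hall b)] with i hi
      omega

lemma low_of_tendsto (h : DenseExt inv ι) {α : Type*} {F : Filter α} [F.NeBot] {k : α → ℤ} {f : T}
    (hk : Tendsto (fun i => ι (k i, k i)) F (𝓝 f)) (ht : Tendsto k F atTop) : Low ι f := by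
  intro n
  constructor
  · refine tendsto_nhds_unique (hk.mul_const (ι (n, n))) (hk.congr' ?_)
    filter_upwards [ht.eventually_ge_atTop n] with i hi
    rw [h.e_mul, max_eq_left hi]
  · refine tendsto_nhds_unique (hk.const_mul (ι (n, n))) (hk.congr' ?_)
    filter_upwards [ht.eventually_ge_atTop n] with i hi
    rw [h.e_mul, max_eq_right hi]

lemma high_of_tendsto (h : DenseExt inv ι) {α : Type*} {F : Filter α} [F.NeBot] {k : α → ℤ} {f : T}
    (hk : Tendsto (fun i => ι (k i, k i)) F (𝓝 f)) (ht : Tendsto k F atBot) : High ι f := by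
  intro n
  constructor
  · refine tendsto_nhds_unique (hk.mul_const (ι (n, n))) (tendsto_const_nhds.congr' ?_)
    filter_upwards [ht.eventually_le_atBot n] with i hi
    rw [h.e_mul, max_eq_right hi]
  · refine tendsto_nhds_unique (hk.const_mul (ι (n, n))) (tendsto_const_nhds.congr' ?_)
    filter_upwards [ht.eventually_le_atBot n] with i hi
    rw [h.e_mul, max_eq_left hi]

/-- Both low idempotents are limits of the `e n`, so each absorbs the other. -/
lemma low_unique (h : DenseExt inv ι) {f g : T} (hf : f * f = f) (hg : g * g = g)
    (lf : Low ι f) (lg : Low ι g) : f = g := by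
  have := h.neBot f
  have := h.neBot g
  have h1 : f * g = f := by
    refine tendsto_nhds_unique ((h.tendsto_idem hg).const_mul f) (tendsto_const_nhds.congr ?_)
    intro p
    exact ((lf p.2).1).symm
  have h2 : f * g = g := by
    refine tendsto_nhds_unique ((h.tendsto_idem hf).mul_const g) (tendsto_const_nhds.congr ?_)
    intro p
    exact ((lg p.2).2).symm
  rw [← h1, h2]

/-- The low idempotent is central: conjugating it by an element of `C_Z` gives a low idempotent,
hence itself, and the elements of `C_Z` are dense. -/
lemma low_comm (h : DenseExt inv ι) {f : T} (hf : f * f = f) (lf : Low ι f) (x : T) :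
    f * x = x * f := by
  refine h.dense.induction_on (p := fun x => f * x = x * f) x
    (isClosed_eq (by fun_prop) (by fun_prop)) ?_
  rintro ⟨c, d⟩
  have hconj : ι (d, c) * f * ι (c, d) = f := by
    refine (h.low_unique hf ?_ lf ?_).symm
    · calc ι (d, c) * f * ι (c, d) * (ι (d, c) * f * ι (c, d))
          = ι (d, c) * (f * (ι (c, d) * ι (d, c)) * f) * ι (c, d) := by simp only [mul_assoc]
        _ = ι (d, c) * f * ι (c, d) := by rw [h.mul_swap, (lf c).1, hf]
    · intro n
      constructor
      · rw [mul_assoc, h.mul_e, ← mul_assoc, mul_assoc _ f, (lf _).1]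
      · rw [← mul_assoc, ← mul_assoc, h.e_mul', mul_assoc _ _ f, (lf _).2]
  calc f * ι (c, d) = ι (c, c) * f * ι (c, d) := by rw [(lf c).2]
    _ = ι (c, d) * (ι (d, c) * f * ι (c, d)) := by rw [← h.mul_swap c d]; simp only [mul_assoc]
    _ = ι (c, d) * f := by rw [hconj]

/-- Since the low idempotent is central, `inv x * x` being low makes `x * inv x` low. -/
lemma low_right (h : DenseExt inv ι) {x : T} (lx : Low ι (inv x * x)) : Low ι (x * inv x) := by
  have hc := h.low_comm (h.idem_left x) lx
  have hx : inv x * x * x = x := by rw [hc, ← mul_assoc, (h.hinv x).1]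
  have he : inv x * x * (x * inv x) = x * inv x := by rw [← mul_assoc, hx]
  intro n
  constructor
  · calc x * inv x * ι (n, n) = x * inv x * (inv x * x) * ι (n, n) := by rw [← hc, he]
      _ = x * inv x * (inv x * x) := by rw [mul_assoc, (lx n).1]
      _ = x * inv x := by rw [← hc, he]
  · calc ι (n, n) * (x * inv x) = ι (n, n) * (inv x * x * (x * inv x)) := by rw [he]
      _ = inv x * x * (x * inv x) := by rw [← mul_assoc, (lx n).2]
      _ = x * inv x := he

lemma low_left (h : DenseExt inv ι) {x : T} (lx : Low ι (x * inv x)) : Low ι (inv x * x) := by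
  have := h.low_right (x := inv x) (by rwa [h.inv_inv'])
  rwa [h.inv_inv'] at this

lemma mem_range_of_eq_e (h : DenseExt inv ι) {x : T} {n : ℤ} (hx : inv x * x = ι (n, n)) :
    x ∈ Set.range ι := by
  have := h.neBot x
  have hlim : Tendsto ι (comap ι (𝓝 x)) (𝓝 x) := tendsto_comap
  have hsnd : ∀ᶠ p : ℤ × ℤ in comap ι (𝓝 x), p.2 = n := by
    have hs := h.tendsto_snd x
    rcases h.trichotomy hs with ⟨m, hm, hev⟩ | ht | ht
    · rw [hx] at hm
      rwa [h.e_inj hm]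
    · exact absurd (hx ▸ h.low_of_tendsto hs ht) (h.not_low_e n)
    · have h1 := ((h.high_of_tendsto hs ht) (n - 1)).1
      rw [hx, h.e_mul] at h1
      have := h.e_inj h1
      omega
  have hfst := h.tendsto_fst x
  rcases h.trichotomy hfst with ⟨m, -, hev⟩ | ht | ht
  · refine ⟨(m, n), tendsto_nhds_unique (tendsto_const_nhds.congr' ?_) hlim⟩
    filter_upwards [hev, hsnd] with p h1 h2
    rw [← h1, ← h2]
  · exact absurd (hx ▸ h.low_left (h.low_of_tendsto hfst ht)) (h.not_low_e n)
  · exfalso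
    have h2 : Tendsto (fun p : ℤ × ℤ => ι (p.1 + 1, p.1 + 1)) (comap ι (𝓝 x))
        (𝓝 (x * ι (n + 1, n + 1) * inv x)) := by
      refine ((hlim.mul_const _).mul ((h.cont.tendsto x).comp hlim)).congr' ?_
      filter_upwards [hsnd] with p hp
      obtain ⟨a, b⟩ := p
      subst hp
      simp only [Function.comp, h.inv_ι, ← h.hom]
      congr 1
      unfold czMul
      ext <;> dsimp only <;> split_ifs <;> dsimp only at * <;> omega
    have htb : Tendsto (fun p : ℤ × ℤ => p.1 + 1) (comap ι (𝓝 x)) atBot :=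
      tendsto_atBot_add_const_right _ _ ht
    have hi1 := h.high_of_tendsto hfst ht
    have hi2 := h.high_of_tendsto h2 htb
    -- Two high limits of the `e k` coincide.
    have heq : x * ι (n + 1, n + 1) * inv x = x * inv x := by
      have e1 : x * inv x * (x * ι (n + 1, n + 1) * inv x) = x * ι (n + 1, n + 1) * inv x :=
        tendsto_nhds_unique (h2.const_mul _) (h2.congr fun p => ((hi1 _).1).symm)
      have e2 : x * inv x * (x * ι (n + 1, n + 1) * inv x) = x * inv x :=
        tendsto_nhds_unique (hfst.mul_const _) (hfst.congr fun p => ((hi2 _).2).symm)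
      rw [← e1, e2]
    have h3 : inv x * x * ι (n + 1, n + 1) * (inv x * x) = inv x * x * (inv x * x) := by
      calc _ = inv x * (x * ι (n + 1, n + 1) * inv x) * x := by simp only [mul_assoc]
        _ = _ := by rw [heq]; simp only [mul_assoc]
    rw [hx, h.e_mul, h.e_mul, h.e_mul] at h3
    have := h.e_inj h3
    omega

/-- The complement of `↑C_Z` consists of the `x` for which `inv x * x` is low. -/
lemma mem_ideal_iff (h : DenseExt inv ι) (x : T) :
    (x ∉ Set.range ι ∧ ∀ y, x * ι y ∉ Set.range ι) ↔ Low ι (inv x * x) := by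
  constructor
  · rintro ⟨hx, hxy⟩
    have := h.neBot x
    have hs := h.tendsto_snd x
    rcases h.trichotomy hs with ⟨m, hm, -⟩ | ht | ht
    · exact absurd (h.mem_range_of_eq_e hm) hx
    · exact h.low_of_tendsto hs ht
    · have hh := h.high_of_tendsto hs ht
      -- Here `x * e 0` has inverse `e 0 * inv x`, so its right idempotent is `e 0`.
      have e00 : ι (0, 0) * ι (0, 0) = ι (0, 0) := h.mul_swap 0 0
      have hi : ι (0, 0) * inv x = inv (x * ι (0, 0)) := by
        apply h.uniq
        constructor
        · calc x * ι (0, 0) * (ι (0, 0) * inv x) * (x * ι (0, 0))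
              = x * (ι (0, 0) * ι (0, 0)) * (inv x * x * ι (0, 0)) := by simp only [mul_assoc]
            _ = x * ι (0, 0) := by rw [(hh 0).1, e00, mul_assoc, e00]
        · calc ι (0, 0) * inv x * (x * ι (0, 0)) * (ι (0, 0) * inv x)
              = ι (0, 0) * (inv x * x * ι (0, 0)) * ι (0, 0) * inv x := by simp only [mul_assoc]
            _ = ι (0, 0) * inv x := by rw [(hh 0).1, e00, e00]
      refine absurd (h.mem_range_of_eq_e (n := 0) ?_) (hxy (0, 0))
      rw [← hi, mul_assoc, ← mul_assoc (inv x), (hh 0).1, e00]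
  · intro hl
    have hx : x ∉ Set.range ι := by
      rintro ⟨⟨a, b⟩, rfl⟩
      rw [h.inv_ι, h.mul_swap] at hl
      exact h.not_low_e b hl
    refine ⟨hx, ?_⟩
    rintro ⟨c, d⟩ ⟨p, hp⟩
    apply hx
    refine ⟨czMul p (d, c), ?_⟩
    rw [h.hom, hp, mul_assoc, h.mul_swap]
    calc x * ι (c, c) = x * (inv x * x * ι (c, c)) := by
          rw [← mul_assoc, ← mul_assoc, (h.hinv x).1]
      _ = x := by rw [(hl c).1, ← mul_assoc, (h.hinv x).1]

/-- The set of `x` with `inv x * x` low is the maximal subgroup at the low idempotent. -/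
lemma main (h : DenseExt inv ι) (I : Set T) (hI : ∀ x, x ∈ I ↔ Low ι (inv x * x))
    (hne : I.Nonempty) :
    ∃ e ∈ I, e * e = e ∧ (∀ e' ∈ I, e' * e' = e' → e' = e) ∧
      (∀ x ∈ I, ∀ y ∈ I, x * y ∈ I) ∧ (∀ x ∈ I, e * x = x ∧ x * e = x) ∧
      (∀ x ∈ I, inv x ∈ I ∧ x * inv x = e ∧ inv x * x = e) := by
  obtain ⟨z, hz⟩ := hne
  obtain ⟨e, he⟩ : ∃ e, e = inv z * z := ⟨_, rfl⟩
  have hee : e * e = e := by rw [he]; exact h.idem_left z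
  have le : Low ι e := by rw [he]; exact (hI z).1 hz
  have hl : ∀ x ∈ I, inv x * x = e := fun x hx =>
    h.low_unique (h.idem_left x) hee ((hI x).1 hx) le
  have hr : ∀ x ∈ I, x * inv x = e := fun x hx =>
    h.low_unique (h.idem_right x) hee (h.low_right ((hI x).1 hx)) le
  have hmem : ∀ x, inv x * x = e → x ∈ I := fun x hx => (hI x).2 (hx ▸ le)
  have hid : ∀ x ∈ I, e * x = x ∧ x * e = x := fun x hx =>
    ⟨by rw [← hr x hx, (h.hinv x).1], by rw [← hl x hx, ← mul_assoc, (h.hinv x).1]⟩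
  have hinvmem : ∀ x ∈ I, inv x ∈ I := fun x hx =>
    hmem _ (by rw [h.inv_inv', hr x hx])
  refine ⟨e, hmem e (by rw [h.inv_idem hee, hee]), hee, ?_, ?_, hid, ?_⟩
  · intro f hf hff
    rw [← hl f hf, h.inv_idem hff, hff]
  · intro x hx y hy
    have h1 : x * y * (inv y * inv x) = e := by
      rw [mul_assoc, ← mul_assoc y, hr y hy, (hid _ (hinvmem x hx)).1, hr x hx]
    have h2 : inv y * inv x * (x * y) = e := by
      rw [mul_assoc, ← mul_assoc (inv x), hl x hx, (hid y hy).1, hl y hy]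
    have hi : inv y * inv x = inv (x * y) := by
      apply h.uniq
      rw [h1, h2, ← mul_assoc, (hid x hx).1, ← mul_assoc, (hid _ (hinvmem y hy)).1]
      exact ⟨rfl, rfl⟩
    exact hmem _ (by rw [← hi, h2])
  · exact fun x hx => ⟨hinvmem x hx, hr x hx, hl x hx⟩

end topology

end DenseExt

theorem stmt_18 {T : Type*} [TopologicalSpace T] [T2Space T] (mul : T → T → T)
    (inv : T → T)
    (hassoc : ∀ a b c : T, mul (mul a b) c = mul a (mul b c))
    (hcont : Continuous fun p : T × T => mul p.1 p.2)
    (hinv : ∀ x : T, mul (mul x (inv x)) x = x ∧ mul (mul (inv x) x) (inv x) = inv x)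
    (hinv_unique : ∀ x y : T,
      (mul (mul x y) x = x ∧ mul (mul y x) y = y) → y = inv x)
    (hinv_cont : Continuous inv)
    (ι : ℤ × ℤ → T) (hinj : Function.Injective ι)
    (hhom : ∀ x y : ℤ × ℤ, ι (czMul x y) = mul (ι x) (ι y))
    (hdense : DenseRange ι)
    (L I : Set T)
    (hL : L = {x : T | x ∉ Set.range ι ∧ ∃ y : ℤ × ℤ, mul x (ι y) ∈ Set.range ι})
    (hI : I = (Set.range ι ∪ L)ᶜ) (hne : I.Nonempty) :
    ∃ e ∈ I, mul e e = e ∧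
      (∀ e' ∈ I, mul e' e' = e' → e' = e) ∧
      (∀ x ∈ I, ∀ y ∈ I, mul x y ∈ I) ∧
      (∀ x ∈ I, mul e x = x ∧ mul x e = x) ∧
      (∀ x ∈ I, inv x ∈ I ∧ mul x (inv x) = e ∧ mul (inv x) x = e) := by
  let _ : Semigroup T := { mul := mul, mul_assoc := hassoc }
  have _ : ContinuousMul T := ⟨hcont⟩
  have h : DenseExt inv ι := ⟨hinv, hinv_unique, hinv_cont, hinj, hhom, hdense⟩
  refine h.main I (fun x => ?_) hne
  rw [← h.mem_ideal_iff, hI, hL]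
  simp only [Set.mem_compl_iff, Set.mem_union, Set.mem_ofPred_eq, not_or, not_and, not_exists]
  exact ⟨fun hx => ⟨hx.1, hx.2 hx.1⟩, fun hx => ⟨hx.1, fun _ => hx.2⟩⟩
end

section
/- Let T be a Hausdorff locally compact topological space with a jointly continuous associative multiplication such that every x ∈ T has a unique element x⁻¹ with x·x⁻¹·x = x and x⁻¹·x·x⁻¹ = x⁻¹, and such that the map x ↦ x⁻¹ is continuous (a locally compact topological inverse semigroup). Let ι : C_Z → T be an injective map with ι(x·y) = ι(x)·ι(y) for all x,y ∈ C_Z whose image is dense in T. Define L = {x ∈ T ∖ ι(C_Z) : ∃ y ∈ C_Z, x·ι(y) ∈ ι(C_Z)} and ↑C_Z = ι(C_Z) ∪ L, and suppose I = T ∖ ↑C_Z is nonempty. Then I, with the subspace topology and the induced multiplication, is a discrete topological space and a group isomorphic to the additive group of integers ℤ. -/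
open Filter Topology

/-- A homomorphism `ι` with dense image from `C_Z` to a topological inverse semigroup, with the
inversion given as a function. -/
structure CzDense {T : Type*} [TopologicalSpace T] [Semigroup T] (inv : T → T)
    (ι : ℤ × ℤ → T) : Prop where
  mul_inv_mul : ∀ x : T, x * inv x * x = x
  inv_mul_inv : ∀ x : T, inv x * x * inv x = inv x
  uniq : ∀ x y : T, x * y * x = x → y * x * y = y → y = inv x
  cont_inv : Continuous inv
  inj : Function.Injective ι
  map_mul : ∀ x y : ℤ × ℤ, ι (czMul x y) = ι x * ι y
  dense : DenseRange ι

/-- `e` is a cluster point of the idempotents `ι (n, n)` as `n → +∞`. -/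
def IsBottom {T : Type*} [TopologicalSpace T] (ι : ℤ × ℤ → T) (e : T) : Prop :=
  ∃ l : Filter ℤ, l.NeBot ∧ l ≤ atTop ∧ Tendsto (fun n => ι (n, n)) l (𝓝 e)

/-- The image of `k` under the homomorphism from `ℤ` to the group with identity `e`. -/
def hom {T : Type*} [Semigroup T] (ι : ℤ × ℤ → T) (e : T) (k : ℤ) : T := e * ι (0, k)

/-- Along an ultrafilter, integers either tend to `+∞` or are bounded above. -/
lemma tendsto_or_bounded {α : Type*} (u : Ultrafilter α) (f : α → ℤ) :
    Tendsto f u atTop ∨ ∃ A, ∀ᶠ i in u, f i ≤ A := by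
  by_cases h : ∃ A, ∀ᶠ i in u, f i ≤ A
  · exact Or.inr h
  · left
    push Not at h
    rw [tendsto_atTop]
    intro b
    exact (h b).mono fun i hi => hi.le

lemma exists_ultrafilter_of_frequently {α : Type*} {l : Filter α} {p : α → Prop}
    (h : ∃ᶠ x in l, p x) : ∃ u : Ultrafilter α, (u : Filter α) ≤ l ∧ ∀ᶠ x in u, p x := by
  have : (l ⊓ 𝓟 {x | p x}).NeBot := frequently_mem_iff_neBot.1 h
  exact ⟨Ultrafilter.of _, (Ultrafilter.of_le _).trans inf_le_left,
    le_principal_iff.1 ((Ultrafilter.of_le _).trans inf_le_right)⟩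

lemma eventually_const_of_bounded {α : Type*} (u : Ultrafilter α) (f : α → ℤ) (A B : ℤ)
    (hA : ∀ᶠ i in u, f i ≤ A) (hB : ∀ᶠ i in u, B ≤ f i) : ∃ c, ∀ᶠ i in u, f i = c := by
  have hs : (⋃ c ∈ Set.Icc B A, {i | f i = c}) ∈ u := by
    filter_upwards [hA, hB] with i h1 h2
    simp [h1, h2]
  obtain ⟨c, -, hc⟩ := (Ultrafilter.finite_biUnion_mem_iff (Set.finite_Icc B A)).1 hs
  exact ⟨c, hc⟩

lemma IsBottom.of_tendsto {T α : Type*} [TopologicalSpace T] {ι : ℤ × ℤ → T} {e : T}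
    {l : Filter α} [hl : l.NeBot] {f : α → ℤ} (hf : Tendsto f l atTop)
    (h : Tendsto (fun i => ι (f i, f i)) l (𝓝 e)) : IsBottom ι e :=
  ⟨map f l, hl.map f, hf, tendsto_map'_iff.2 h⟩

section
set_option linter.unusedSectionVars false

variable {T : Type*} [TopologicalSpace T] [T2Space T] [Semigroup T] [ContinuousMul T]
  {inv : T → T} {ι : ℤ × ℤ → T}

lemma CzDense.mul_eq (S : CzDense inv ι) {a b c d p q : ℤ}
    (hp : p = a + max b c - b) (hq : q = d + max b c - c) : ι (a, b) * ι (c, d) = ι (p, q) := by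
  rw [← S.map_mul]
  congr 1
  unfold czMul
  dsimp only
  split_ifs <;> ext <;> simp <;> omega

lemma CzDense.inv_eq (S : CzDense inv ι) (a b : ℤ) : inv (ι (a, b)) = ι (b, a) := by
  symm
  apply S.uniq
  · rw [S.mul_eq (p := a) (q := a), S.mul_eq (p := a) (q := b)] <;> omega
  · rw [S.mul_eq (p := b) (q := b), S.mul_eq (p := b) (q := a)] <;> omega

lemma CzDense.induction (S : CzDense inv ι) {p : T → Prop} (hc : IsClosed {x | p x})
    (h : ∀ a b, p (ι (a, b))) (x : T) : p x :=
  S.dense.induction_on x hc fun y => h y.1 y.2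

lemma CzDense.exists_ultrafilter (S : CzDense inv ι) (x : T) :
    ∃ u : Ultrafilter (ℤ × ℤ), Tendsto ι u (𝓝 x) := by
  have : (comap ι (𝓝 x)).NeBot := by
    rw [comap_neBot_iff]
    intro t ht
    obtain ⟨a, ha⟩ := S.dense.exists_mem_open isOpen_interior ⟨x, mem_interior_iff_mem_nhds.2 ht⟩
    exact ⟨a, interior_subset ha⟩
  exact ⟨Ultrafilter.of _, tendsto_comap.mono_left (Ultrafilter.of_le _)⟩

lemma IsBottom.mul_idem (S : CzDense inv ι) {e : T} (he : IsBottom ι e) (n : ℤ) :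
    e * ι (n, n) = e := by
  obtain ⟨l, hl, hle, ht⟩ := he
  refine tendsto_nhds_unique (ht.mul_const _) (ht.congr' ?_)
  filter_upwards [hle (eventually_ge_atTop n)] with m hm
  rw [S.mul_eq (p := m) (q := m)] <;> omega

lemma IsBottom.idem_mul (S : CzDense inv ι) {e : T} (he : IsBottom ι e) (n : ℤ) :
    ι (n, n) * e = e := by
  obtain ⟨l, hl, hle, ht⟩ := he
  refine tendsto_nhds_unique (ht.const_mul _) (ht.congr' ?_)
  filter_upwards [hle (eventually_ge_atTop n)] with m hm
  rw [S.mul_eq (p := m) (q := m)] <;> omega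

lemma IsBottom.unique (S : CzDense inv ι) {e f : T} (he : IsBottom ι e) (hf : IsBottom ι f) :
    e = f := by
  have h1 : f * e = e := by
    obtain ⟨l, hl, hle, ht⟩ := hf
    refine tendsto_nhds_unique (ht.mul_const e) ?_
    simp only [he.idem_mul S, tendsto_const_nhds]
  have h2 : f * e = f := by
    obtain ⟨l, hl, hle, ht⟩ := he
    refine tendsto_nhds_unique (ht.const_mul f) ?_
    simp only [hf.mul_idem S, tendsto_const_nhds]
  rw [← h1, h2]

lemma IsBottom.idem (S : CzDense inv ι) {e : T} (he : IsBottom ι e) : e * e = e := by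
  obtain ⟨l, hl, hle, ht⟩ := id he
  refine tendsto_nhds_unique (ht.mul_const e) ?_
  simp only [he.idem_mul S, tendsto_const_nhds]

lemma IsBottom.ne (S : CzDense inv ι) {e : T} (he : IsBottom ι e) (n : ℤ) : e ≠ ι (n, n) := by
  intro h
  have h1 := he.mul_idem S (n + 1)
  rw [h, S.mul_eq (p := n + 1) (q := n + 1) (by omega) (by omega)] at h1
  have := S.inj h1
  simp at this

/-- Conjugation by `ι (a, b)` shifts the chain of idempotents, so it fixes their limit. -/
lemma IsBottom.conj_range (S : CzDense inv ι) {e : T} (he : IsBottom ι e) (a b : ℤ) :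
    ι (a, b) * e * ι (b, a) = e := by
  refine IsBottom.unique S ?_ he
  obtain ⟨l, hl, hle, ht⟩ := he
  have h2 : Tendsto (fun n : ℤ => n + (a - b)) l atTop :=
    (tendsto_atTop_add_const_right _ _ tendsto_id).mono_left hle
  refine IsBottom.of_tendsto h2 (((ht.const_mul (ι (a, b))).mul_const (ι (b, a))).congr' ?_)
  filter_upwards [hle (eventually_ge_atTop b)] with m hm
  rw [S.mul_eq (p := a + m - b) (q := m), S.mul_eq (p := m + (a - b)) (q := m + (a - b))] <;> omega

lemma IsBottom.conj (S : CzDense inv ι) {e : T} (he : IsBottom ι e) (x : T) :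
    x * e * inv x = e := by
  refine S.induction (p := fun x => x * e * inv x = e) ?_ ?_ x
  · have := S.cont_inv
    exact isClosed_eq (by fun_prop) continuous_const
  · intro a b
    rw [S.inv_eq, he.conj_range S]

lemma IsBottom.comm (S : CzDense inv ι) {e : T} (he : IsBottom ι e) (x : T) :
    e * x = x * e := by
  refine S.induction (p := fun x => e * x = x * e) ?_ ?_ x
  · exact isClosed_eq (by fun_prop) (by fun_prop)
  · intro a b
    conv_lhs => rw [← he.conj_range S a b]
    rw [mul_assoc, S.mul_eq (p := b) (q := b) (by omega) (by omega), mul_assoc, he.mul_idem S]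

lemma tendsto_left (S : CzDense inv ι) {α : Type*} {l : Filter α} {a b : α → ℤ} {x : T}
    (h : Tendsto (fun i => ι (a i, b i)) l (𝓝 x)) :
    Tendsto (fun i => ι (a i, a i)) l (𝓝 (x * inv x)) := by
  refine (h.mul ((S.cont_inv.tendsto x).comp h)).congr fun i => ?_
  simp only [Function.comp, S.inv_eq]
  rw [S.mul_eq (p := a i) (q := a i)] <;> omega

lemma tendsto_right (S : CzDense inv ι) {α : Type*} {l : Filter α} {a b : α → ℤ} {x : T}
    (h : Tendsto (fun i => ι (a i, b i)) l (𝓝 x)) :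
    Tendsto (fun i => ι (b i, b i)) l (𝓝 (inv x * x)) := by
  refine (((S.cont_inv.tendsto x).comp h).mul h).congr fun i => ?_
  simp only [Function.comp, S.inv_eq]
  rw [S.mul_eq (p := b i) (q := b i)] <;> omega

/-- A limit `x` would satisfy `x * x⁻¹ = ι (A, A)` and `x⁻¹ * x = e`, hence `e = x * e * x⁻¹ = ι (A, A)`. -/
lemma no_limit_right (S : CzDense inv ι) {α : Type*} {l : Filter α} [l.NeBot] {c : α → ℤ} {A : ℤ}
    {x : T} (hc : Tendsto c l atTop) (h : Tendsto (fun i => ι (A, c i)) l (𝓝 x)) : False := by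
  have he : IsBottom ι (inv x * x) := .of_tendsto hc (tendsto_right S h)
  have h1 : x * inv x = ι (A, A) :=
    tendsto_nhds_unique (tendsto_left S (a := fun _ => A) h) tendsto_const_nhds
  have h2 := he.conj S x
  rw [← mul_assoc, S.mul_inv_mul, h1] at h2
  exact he.ne S A h2.symm

lemma no_limit_left (S : CzDense inv ι) {α : Type*} {l : Filter α} [l.NeBot] {c : α → ℤ} {A : ℤ}
    {x : T} (hc : Tendsto c l atTop) (h : Tendsto (fun i => ι (c i, A)) l (𝓝 x)) : False := by
  refine no_limit_right S (x := inv x) (A := A) hc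
    (((S.cont_inv.tendsto x).comp h).congr fun i => ?_)
  simp only [Function.comp, S.inv_eq]

/-- If neither coordinate tends to `+∞` along an ultrafilter converging to `x`, then both are at most
some `A`; the difference of the coordinates is then eventually constant, because `x * ι (A, A)` and
`ι (A, A) * x` exist, and so `x * ι (A, A)` lies in the image of `ι`. -/
lemma exists_isBottom (S : CzDense inv ι) {x : T} (hx : ∀ y, x * ι y ∉ Set.range ι) :
    ∃ e, IsBottom ι e ∧ e * x = x := by
  obtain ⟨u, hu⟩ := S.exists_ultrafilter x
  replace hu : Tendsto (fun i : ℤ × ℤ => ι (i.1, i.2)) u (𝓝 x) := hu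
  rcases tendsto_or_bounded u (fun i => i.1) with h1 | ⟨A, h1⟩
  · exact ⟨_, .of_tendsto h1 (tendsto_left S hu), S.mul_inv_mul x⟩
  rcases tendsto_or_bounded u (fun i => i.2) with h2 | ⟨B, h2⟩
  · have he : IsBottom ι (inv x * x) := .of_tendsto h2 (tendsto_right S hu)
    refine ⟨_, he, ?_⟩
    rw [he.comm S, ← mul_assoc, S.mul_inv_mul]
  exfalso
  set C := max A B
  have h3 : Tendsto (fun i : ℤ × ℤ => ι (i.1 - i.2 + C, C)) u (𝓝 (x * ι (C, C))) := by
    refine (hu.mul_const (ι (C, C))).congr' ?_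
    filter_upwards [h2] with i hi
    rw [S.mul_eq] <;> omega
  have h4 : Tendsto (fun i : ℤ × ℤ => ι (C, i.2 - i.1 + C)) u (𝓝 (ι (C, C) * x)) := by
    refine (hu.const_mul (ι (C, C))).congr' ?_
    filter_upwards [h1] with i hi
    rw [S.mul_eq] <;> omega
  rcases tendsto_or_bounded u (fun i => i.1 - i.2 + C) with h5 | ⟨D, h5⟩
  · exact no_limit_left S h5 h3
  rcases tendsto_or_bounded u (fun i => i.2 - i.1 + C) with h6 | ⟨E, h6⟩
  · exact no_limit_right S h6 h4
  obtain ⟨c, hc⟩ := eventually_const_of_bounded u (fun i => i.1 - i.2 + C) D (2 * C - E) h5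
    (h6.mono fun i hi => by omega)
  apply hx (C, C)
  refine ⟨(c, C), tendsto_nhds_unique (tendsto_const_nhds.congr' ?_) h3⟩
  filter_upwards [hc] with i hi
  rw [hi]

lemma not_mem_range_of_mem (S : CzDense inv ι) {e x : T} (he : IsBottom ι e) (hx : e * x = x)
    (y : ℤ × ℤ) : x * ι y ∉ Set.range ι := by
  rintro ⟨⟨a, b⟩, hs⟩
  have h1 : e * ι (a, b) = ι (a, b) := by rw [hs, ← mul_assoc, hx]
  have h2 : ι (a, b) * ι (b, a) = ι (a, a) := S.mul_eq (by omega) (by omega)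
  apply he.ne S a
  rw [← he.mul_idem S a, ← h2, ← mul_assoc, h1]

lemma hom_eq (S : CzDense inv ι) {e : T} (he : IsBottom ι e) (a b : ℤ) :
    e * ι (a, b) = hom ι e (b - a) := by
  unfold hom
  rw [← he.mul_idem S (max a 0), mul_assoc, mul_assoc,
    S.mul_eq (p := max a 0) (q := max a 0 + (b - a)) (by omega) (by omega),
    S.mul_eq (p := max a 0) (q := max a 0 + (b - a)) (by omega) (by omega)]

lemma hom_add (S : CzDense inv ι) {e : T} (he : IsBottom ι e) (m n : ℤ) :
    hom ι e (m + n) = hom ι e m * hom ι e n := by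
  have h1 : hom ι e m * hom ι e n = e * (ι (0, m) * ι (0, n)) := by
    unfold hom
    rw [mul_assoc, ← mul_assoc (ι (0, m)), ← he.comm S, ← mul_assoc, ← mul_assoc, ← mul_assoc,
      he.idem S, mul_assoc]
  rw [h1, S.mul_eq rfl rfl, hom_eq S he]
  congr 1
  omega

lemma hom_zero (S : CzDense inv ι) {e : T} (he : IsBottom ι e) : hom ι e 0 = e :=
  he.mul_idem S 0

lemma mul_hom (S : CzDense inv ι) {e : T} (he : IsBottom ι e) (k : ℤ) :
    e * hom ι e k = hom ι e k := by
  rw [hom, ← mul_assoc, he.idem S]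

lemma mul_inv_of_mem (S : CzDense inv ι) {e x : T} (he : IsBottom ι e) (hx : e * x = x) :
    x * inv x = e := by
  have := he.conj S x
  rwa [← he.comm S, hx] at this

lemma inv_mem (S : CzDense inv ι) {e x : T} (he : IsBottom ι e) (hx : e * x = x) :
    e * inv x = inv x := by
  rw [he.comm S]
  nth_rw 1 [← mul_inv_of_mem S he hx]
  rw [← mul_assoc, S.inv_mul_inv]

lemma inv_mul_of_mem (S : CzDense inv ι) {e x : T} (he : IsBottom ι e) (hx : e * x = x) :
    inv x * x = e := by
  have h1 : x = inv (inv x) := S.uniq _ _ (S.inv_mul_inv x) (S.mul_inv_mul x)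
  have h2 := mul_inv_of_mem S he (inv_mem S he hx)
  rwa [← h1] at h2

lemma inv_hom (S : CzDense inv ι) {e : T} (he : IsBottom ι e) (k : ℤ) :
    inv (hom ι e k) = hom ι e (-k) := by
  symm
  apply S.uniq
  · rw [← hom_add S he, ← hom_add S he]
    congr 1
    omega
  · rw [← hom_add S he, ← hom_add S he]
    congr 1
    omega

lemma mem_closure_hom (S : CzDense inv ι) {e x : T} (he : IsBottom ι e) (hx : e * x = x) :
    x ∈ closure (Set.range (hom ι e)) := by
  rw [← hx]
  refine S.induction (p := fun x => e * x ∈ closure (Set.range (hom ι e))) ?_ ?_ x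
  · exact isClosed_closure.preimage (continuous_const_mul e)
  · intro a b
    rw [hom_eq S he]
    exact subset_closure ⟨_, rfl⟩

/-- If the chain did not converge to `e`, there would be arbitrarily large `n` with `ι (n, n)` inside
and `ι (n + 1, n + 1)` outside a compact neighbourhood of `e`. Such `ι (n, n)` accumulate at `e` by
uniqueness, and so do their conjugates `ι (n + 1, n + 1)`, as conjugation fixes `e`. -/
lemma tendsto_idem [LocallyCompactSpace T] (S : CzDense inv ι) {e : T} (he : IsBottom ι e) :
    Tendsto (fun n : ℤ => ι (n, n)) atTop (𝓝 e) := by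
  intro O hO
  obtain ⟨K, hK, hKO, hKc⟩ := local_compact_nhds hO
  by_contra hcon
  have hcross : ∃ᶠ n : ℤ in atTop, ι (n, n) ∈ K ∧ ι (n + 1, n + 1) ∉ K := by
    intro hev
    have hev' : ∀ᶠ n : ℤ in atTop, ι (n, n) ∈ K → ι (n + 1, n + 1) ∈ K :=
      hev.mono fun n hn h1 => by
        by_contra h2
        exact hn ⟨h1, h2⟩
    obtain ⟨N, hN⟩ := eventually_atTop.1 hev'
    obtain ⟨l, hl, hle, ht⟩ := id he
    obtain ⟨n₀, h0, hn₀⟩ := ((ht.eventually_mem hK).and (hle (eventually_ge_atTop N))).exists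
    apply hcon
    show ∀ᶠ n : ℤ in atTop, ι (n, n) ∈ O
    filter_upwards [eventually_ge_atTop n₀] with n hn
    apply hKO
    induction n, hn using Int.leInduction with
    | base => exact h0
    | succ n hn ih => exact hN n (le_trans hn₀ hn) ih
  obtain ⟨u, hu1, hu2⟩ := exists_ultrafilter_of_frequently hcross
  obtain ⟨y, -, hy⟩ := hKc.ultrafilter_le_nhds (u.map fun n => ι (n, n))
    (le_principal_iff.2 (hu2.mono fun n hn => hn.1))
  have hy : Tendsto (fun n : ℤ => ι (n, n)) u (𝓝 y) := hy
  have hye : y = e := IsBottom.unique S ⟨u, u.neBot, hu1, hy⟩ he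
  subst hye
  have h3 := (hy.const_mul (ι (1, 0))).mul_const (ι (0, 1))
  rw [he.conj_range S] at h3
  have h4 := (h3.eventually_mem hK).and (((eventually_ge_atTop 0).filter_mono hu1).and hu2)
  obtain ⟨n, h5, h6, -, h7⟩ := h4.exists
  rw [S.mul_eq (p := n + 1) (q := n) (by omega) (by omega),
    S.mul_eq (p := n + 1) (q := n + 1) (by omega) (by omega)] at h5
  exact h7 h5

lemma tendsto_hom [LocallyCompactSpace T] (S : CzDense inv ι) {e : T} (he : IsBottom ι e) (k : ℤ) :
    Tendsto (fun n : ℤ => ι (n, n + k)) atTop (𝓝 (hom ι e k)) := by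
  refine ((tendsto_idem S he).mul_const (ι (0, k))).congr' ?_
  filter_upwards [eventually_ge_atTop 0] with n hn
  rw [S.mul_eq] <;> omega

/-- Let `K` be a compact neighbourhood of the group. For large `k` some `ι (n, n + k)` lies outside the
interior of `K` while `ι (n + 1, n + 1 + k)` lies inside. As `k → ∞` the latter accumulate at some `y`
with `y⁻¹ * y = e`, so `y` and its conjugate by `ι (0, 1)` are in the group; but this conjugate is a
limit of the points outside. -/
lemma not_isCompact [LocallyCompactSpace T] (S : CzDense inv ι) {e : T} (he : IsBottom ι e) :
    ¬ IsCompact {x | e * x = x} := by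
  intro hc
  obtain ⟨K, hK, hIK⟩ := exists_compact_superset hc
  have h1 : ∀ᶠ k : ℤ in atTop, ι (0, k) ∉ K := by
    by_contra hcon
    have hcon' : ∃ᶠ k : ℤ in atTop, ι (0, k) ∈ K := hcon
    obtain ⟨u, hu1, hu2⟩ := exists_ultrafilter_of_frequently hcon'
    obtain ⟨y, -, hy⟩ := hK.ultrafilter_le_nhds (u.map fun n => ι (0, n)) (le_principal_iff.2 hu2)
    exact no_limit_right S (l := (u : Filter ℤ)) (c := id) hu1 hy
  have h2 : ∀ k : ℤ, ι (0, k) ∉ K →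
      ∃ n : ℤ, 0 ≤ n ∧ ι (n, n + k) ∉ interior K ∧ ι (n + 1, n + 1 + k) ∈ interior K := by
    intro k hk
    by_contra! hcon
    have hout : ∀ n : ℤ, 0 ≤ n → ι (n, n + k) ∉ interior K := by
      intro n hn
      induction n, hn using Int.leInduction with
      | base => simpa using fun h => hk (interior_subset h)
      | succ n hn ih => exact hcon n hn ih
    have hin := (tendsto_hom S he k).eventually_mem
      (isOpen_interior.mem_nhds (hIK (mul_hom S he k)))
    obtain ⟨n, hn, hn0⟩ := (hin.and (eventually_ge_atTop 0)).exists
    exact hout n hn0 hn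
  choose! f hf using h2
  have h3 := h1.mono hf
  let u : Ultrafilter ℤ := Ultrafilter.of atTop
  have hu : (u : Filter ℤ) ≤ atTop := Ultrafilter.of_le _
  obtain ⟨y, -, hy⟩ := hK.ultrafilter_le_nhds (u.map fun k => ι (f k + 1, f k + 1 + k))
    (le_principal_iff.2 (hu (h3.mono fun k hk => interior_subset hk.2.2)))
  have hy : Tendsto (fun k => ι (f k + 1, f k + 1 + k)) u (𝓝 y) := hy
  have hfk : Tendsto (fun k => f k + 1 + k) u atTop := by
    refine tendsto_atTop_mono' _ ?_ (tendsto_id.mono_left hu)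
    filter_upwards [hu h3] with k hk
    simp only [id]
    omega
  have hye : inv y * y = e := IsBottom.unique S (.of_tendsto hfk (tendsto_right S hy)) he
  have hyI : y * e = y := by rw [← hye, ← mul_assoc, S.mul_inv_mul]
  have hzI : ι (0, 1) * y * ι (1, 0) ∈ {x | e * x = x} := by
    show e * _ = _
    rw [← mul_assoc, ← mul_assoc, he.comm S, mul_assoc (ι (0, 1)), he.comm S, hyI]
  have hz := (hy.const_mul (ι (0, 1))).mul_const (ι (1, 0))
  obtain ⟨k, hk, hk2, hpos⟩ := ((hz.eventually_mem (isOpen_interior.mem_nhds (hIK hzI))).and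
    ((h3.filter_mono hu).and (hfk.eventually_ge_atTop 1))).exists
  rw [S.mul_eq (p := f k) (q := f k + 1 + k) (by omega) (by omega)] at hk
  rw [S.mul_eq (p := f k) (q := f k + k) (by omega) (by omega)] at hk
  exact hk2.2.1 hk

/-- The standard argument for monothetic groups: if the positive powers of the generator return to
every neighbourhood of `e`, then by compactness the gaps between their returns to a compact
neighbourhood are bounded, so finitely many translates of it contain all positive powers, which
are dense. -/
lemma isCompact_of_recurrent [LocallyCompactSpace T] (S : CzDense inv ι) {e : T}
    (he : IsBottom ι e) (hrec : ∀ V ∈ 𝓝 e, ∀ N : ℤ, ∃ k ≥ N, hom ι e k ∈ V) :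
    IsCompact {x | e * x = x} := by
  have hclosed : IsClosed {x | e * x = x} := isClosed_eq (continuous_const_mul e) continuous_id
  obtain ⟨K, hK, heK⟩ := exists_compact_mem_nhds e
  have hKI : IsCompact (K ∩ {x | e * x = x}) := hK.inter_right hclosed
  have hret : ∀ g : T, e * g = g → ∃ k : ℕ, 1 ≤ k ∧ hom ι e k * g ∈ interior K := by
    intro g hg
    have h1 : (fun t => t * g) ⁻¹' interior K ∈ 𝓝 (inv g) := by
      refine (continuous_mul_const g).continuousAt.preimage_mem_nhds ?_
      rw [inv_mul_of_mem S he hg]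
      exact interior_mem_nhds.2 heK
    obtain ⟨-, hm, m, rfl⟩ := mem_closure_iff_nhds.1
      (mem_closure_hom S he (inv_mem S he hg)) _ h1
    have h2 : (fun t => t * (hom ι e m * g)) ⁻¹' interior K ∈ 𝓝 e := by
      refine (continuous_mul_const _).continuousAt.preimage_mem_nhds ?_
      rw [← mul_assoc, mul_hom S he]
      exact isOpen_interior.mem_nhds hm
    obtain ⟨k, hk, hkV⟩ := hrec _ h2 (1 - m)
    refine ⟨(k + m).toNat, by omega, ?_⟩
    rw [Int.toNat_of_nonneg (by omega), hom_add S he, mul_assoc]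
    exact hkV
  -- Every point of the compact set returns to it after at most `N` steps.
  obtain ⟨t, ht⟩ := hKI.elim_finite_subcover
    (fun k : ℕ => (fun g => hom ι e ((k : ℤ) + 1) * g) ⁻¹' interior K)
    (fun k => isOpen_interior.preimage (continuous_const_mul _)) (by
      rintro g ⟨-, hg⟩
      obtain ⟨k, hk1, hk⟩ := hret g hg
      refine Set.mem_iUnion.2 ⟨k - 1, ?_⟩
      have : (((k - 1 : ℕ) : ℤ) + 1) = k := by omega
      simpa only [Set.mem_preimage, this] using hk)
  set N : ℕ := t.sup id + 1
  -- Hence `hom e n` can be brought into `K` by going back at most `N` steps.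
  have hstep : ∀ n : ℕ, ∃ j : ℕ, j ≤ N ∧ hom ι e ((n : ℤ) - j) ∈ K := by
    intro n
    induction n with
    | zero => exact ⟨0, by omega, by simpa [hom_zero S he] using mem_of_mem_nhds heK⟩
    | succ n ih =>
      obtain ⟨j, hj, hjK⟩ := ih
      by_cases hjN : j < N
      · refine ⟨j + 1, hjN, ?_⟩
        convert hjK using 2
        push_cast
        ring
      · obtain ⟨k, hkt, hk⟩ := Set.mem_iUnion₂.1 (ht ⟨hjK, mul_hom S he _⟩)
        have hkN : k ≤ t.sup id := Finset.le_sup (f := id) hkt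
        refine ⟨N - k, by omega, ?_⟩
        simp only [Set.mem_preimage, ← hom_add S he] at hk
        convert interior_subset hk using 2
        push_cast [show k ≤ N by omega]
        have : (j : ℤ) = N := by omega
        rw [this]
        ring
  set C : Set T := ⋃ j ∈ Set.Iic N, (fun g => hom ι e (j : ℤ) * g) '' (K ∩ {x | e * x = x})
  have hC : IsCompact C := (Set.finite_Iic N).isCompact_biUnion fun j _ =>
    hKI.image (continuous_const_mul _)
  have hpos : ∀ n : ℤ, 0 ≤ n → hom ι e n ∈ C := by
    intro n hn
    lift n to ℕ using hn
    obtain ⟨j, hj, hjK⟩ := hstep n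
    refine Set.mem_iUnion₂.2 ⟨j, hj, _, ⟨hjK, mul_hom S he _⟩, ?_⟩
    simp only [← hom_add S he]
    congr 1
    ring
  -- A negative power is a limit of positive ones, because positive powers return close to `e`.
  have hall : ∀ n : ℤ, hom ι e n ∈ C := by
    intro n
    rw [← hC.isClosed.closure_eq, mem_closure_iff_nhds]
    intro V hV
    have h2 : (fun t => t * hom ι e n) ⁻¹' V ∈ 𝓝 e := by
      refine (continuous_mul_const _).continuousAt.preimage_mem_nhds ?_
      rwa [mul_hom S he]
    obtain ⟨k, hk, hkV⟩ := hrec _ h2 (-n)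
    refine ⟨hom ι e (k + n), ?_, hpos _ (by omega)⟩
    rw [hom_add S he]
    exact hkV
  refine hC.of_isClosed_subset hclosed fun x hx => ?_
  exact closure_minimal (Set.range_subset_iff.2 hall) hC.isClosed (mem_closure_hom S he hx)

/-- As the group is not compact, `hom e k` stays away from `e` for `k` large, hence also for `-k` large.
So `hom e` has trivial kernel, and some neighbourhood of `e` contains only finitely many of its
values, which are dense in the group. -/
lemma exists_isolating [LocallyCompactSpace T] (S : CzDense inv ι) {e : T} (he : IsBottom ι e) :
    Function.Injective (hom ι e) ∧ ∃ U, IsOpen U ∧ e ∈ U ∧ ∀ x ∈ U, e * x = x → x = e := by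
  have hnr : ∃ V ∈ 𝓝 e, ∃ N : ℤ, ∀ k ≥ N, hom ι e k ∉ V := by
    by_contra! hcon
    exact not_isCompact S he (isCompact_of_recurrent S he hcon)
  obtain ⟨V, hV, N, hN⟩ := hnr
  have hinve : inv e = e := by
    simpa [hom_zero S he] using inv_hom S he 0
  constructor
  · -- A kernel element `d > 0` would put all multiples of `d` in the kernel.
    have hker : ∀ d : ℤ, 0 < d → hom ι e d ≠ e := by
      intro d hd h
      have hmul : ∀ n : ℕ, hom ι e (n * d) = e := by
        intro n
        induction n with
        | zero => simpa using hom_zero S he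
        | succ n ih =>
          rw [show ((n + 1 : ℕ) : ℤ) * d = n * d + d by push_cast; ring, hom_add S he, ih, h,
            he.idem S]
      apply hN (N.toNat * d) _ (by rw [hmul]; exact mem_of_mem_nhds hV)
      have : N ≤ N.toNat := Int.self_le_toNat N
      nlinarith
    have hlt : ∀ a b : ℤ, a < b → hom ι e a ≠ hom ι e b := by
      intro a b hab h
      apply hker (b - a) (by omega)
      rw [sub_eq_add_neg, hom_add S he, ← h, ← hom_add S he, add_neg_cancel, hom_zero S he]
    intro a b hab
    rcases lt_trichotomy a b with h | h | h
    · exact absurd hab (hlt a b h)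
    · exact h
    · exact absurd hab.symm (hlt b a h)
  · set W := interior V ∩ inv ⁻¹' interior V
    have hWo : IsOpen W := isOpen_interior.inter (isOpen_interior.preimage S.cont_inv)
    have heV : e ∈ interior V := mem_interior_iff_mem_nhds.2 hV
    set F : Set T := hom ι e '' Set.Icc (-N) N \ {e}
    have hF : F.Finite := ((Set.finite_Icc _ _).image _).subset Set.sdiff_subset
    have hUo : IsOpen (W \ F) := hWo.sdiff hF.isClosed
    refine ⟨W \ F, hUo, ⟨⟨heV, by simpa [hinve] using heV⟩, fun h => h.2 rfl⟩, ?_⟩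
    intro x hxU hx
    have hx2 := hUo.inter_closure ⟨hxU, mem_closure_hom S he hx⟩
    have hsub : (W \ F) ∩ Set.range (hom ι e) ⊆ {e} := by
      rintro - ⟨⟨⟨h1, h2⟩, h3⟩, k, rfl⟩
      by_contra hne
      refine h3 ⟨⟨k, ⟨?_, ?_⟩, rfl⟩, hne⟩
      · by_contra hlt
        rw [Set.mem_preimage, inv_hom S he] at h2
        exact hN (-k) (by omega) (interior_subset h2)
      · by_contra hlt
        exact hN k (by omega) (interior_subset h1)
    simpa using closure_mono hsub hx2

end

theorem stmt_19 {T : Type*} [TopologicalSpace T] [T2Space T] [LocallyCompactSpace T]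
    (mul : T → T → T) (inv : T → T)
    (hassoc : ∀ a b c : T, mul (mul a b) c = mul a (mul b c))
    (hcont : Continuous fun p : T × T => mul p.1 p.2)
    (hinv : ∀ x : T, mul (mul x (inv x)) x = x ∧ mul (mul (inv x) x) (inv x) = inv x)
    (hinv_unique : ∀ x y : T,
      (mul (mul x y) x = x ∧ mul (mul y x) y = y) → y = inv x)
    (hinv_cont : Continuous inv)
    (ι : ℤ × ℤ → T) (hinj : Function.Injective ι)
    (hhom : ∀ x y : ℤ × ℤ, ι (czMul x y) = mul (ι x) (ι y))
    (hdense : DenseRange ι)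
    (L I : Set T)
    (hL : L = {x : T | x ∉ Set.range ι ∧ ∃ y : ℤ × ℤ, mul x (ι y) ∈ Set.range ι})
    (hI : I = (Set.range ι ∪ L)ᶜ) (hne : I.Nonempty) :
    (∀ x ∈ I, ∃ U : Set T, IsOpen U ∧ U ∩ I = {x}) ∧
    ∃ φ : ℤ → T, Function.Injective φ ∧ Set.range φ = I ∧
      ∀ m n : ℤ, φ (m + n) = mul (φ m) (φ n) := by
  let _ : Semigroup T := { mul := mul, mul_assoc := hassoc }
  have : ContinuousMul T := ⟨hcont⟩
  have S : CzDense inv ι := ⟨fun x => (hinv x).1, fun x => (hinv x).2,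
    fun x y h1 h2 => hinv_unique x y ⟨h1, h2⟩, hinv_cont, hinj, hhom, hdense⟩
  -- Elements of the image of `ι` also have a translate in the image.
  have hmem : ∀ x, x ∈ I ↔ ∀ y, x * ι y ∉ Set.range ι := by
    intro x
    subst hI hL
    constructor
    · intro h y hy
      by_cases hx : x ∈ Set.range ι
      · exact h (Or.inl hx)
      · exact h (Or.inr ⟨hx, y, hy⟩)
    · rintro h (⟨s, rfl⟩ | ⟨-, y, hy⟩)
      · exact h s ⟨_, S.map_mul s s⟩
      · exact h y hy
  obtain ⟨x₀, hx₀⟩ := hne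
  obtain ⟨e, he, -⟩ := exists_isBottom S ((hmem x₀).1 hx₀)
  have hIe : ∀ x, x ∈ I ↔ e * x = x := by
    intro x
    rw [hmem]
    constructor
    · intro h
      obtain ⟨f, hf, hfx⟩ := exists_isBottom S h
      rwa [he.unique S hf]
    · exact fun h => not_mem_range_of_mem S he h
  obtain ⟨hinjective, U, hU, heU, hUe⟩ := exists_isolating S he
  have hdisc : ∀ x ∈ I, ∃ U : Set T, IsOpen U ∧ U ∩ I = {x} := by
    intro x hx
    rw [hIe] at hx
    refine ⟨(fun t => inv x * t) ⁻¹' U, hU.preimage (continuous_const_mul _), ?_⟩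
    ext t
    rw [Set.mem_inter_iff, Set.mem_preimage, Set.mem_singleton_iff, hIe]
    constructor
    · rintro ⟨h1, h2⟩
      have h3 := hUe _ h1 (by rw [← mul_assoc, inv_mem S he hx])
      rw [← h2, ← mul_inv_of_mem S he hx, mul_assoc, h3, ← he.comm S, hx]
    · rintro rfl
      exact ⟨by rwa [inv_mul_of_mem S he hx], hx⟩
  refine ⟨hdisc, hom ι e, hinjective, ?_, hom_add S he⟩
  apply Set.Subset.antisymm
  · rintro - ⟨k, rfl⟩
    exact (hIe _).2 (mul_hom S he k)
  · intro x hx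
    obtain ⟨O, hO, hOx⟩ := hdisc x hx
    have hxO : x ∈ O := (hOx.symm.subset rfl).1
    obtain ⟨-, hy, k, rfl⟩ := mem_closure_iff.1 (mem_closure_hom S he ((hIe x).1 hx)) O hO hxO
    exact ⟨k, hOx.subset ⟨hy, (hIe _).2 (mul_hom S he k)⟩⟩
end
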